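/- For any C*-algebras A and B, the Banach *-algebra A ⊗̂ B has the Wiener property: every proper closed two-sided ideal of A ⊗̂ B is annihilated by some irreducible *-representation of A ⊗̂ B on a Hilbert space. -/

import Mathlib

open scoped TensorProduct
open Pointwise

universe u

noncomputable section

/-- A C⋆-norm on a complex `*`-algebra.  On a matrix algebra over a C⋆-algebra such a
norm is unique, namely the canonical C⋆-norm. -/
structure IsCStarNorm {M : Type*} [NonUnitalRing M] [StarRing M] [Module ℂ M]
    (N : M → ℝ) : Prop where
  add_le : ∀ x y, N (x + y) ≤ N x + N y
  smul_eq : ∀ (c : ℂ) (x : M), N (c • x) = ‖c‖ * N x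
  eq_zero_of : ∀ x, N x = 0 → x = 0
  mul_le : ∀ x y, N (x * y) ≤ N x * N y
  star_mul_self : ∀ x, N (star x * x) = N x * N x

/-- The operator space projective tensor norm `‖·‖_∧` on the algebraic tensor product
`A ⊗ B`, relative to given families of matrix norms on `A` and `B`:
`‖u‖_∧ = inf { ‖α‖ ‖v‖ ‖w‖ ‖β‖ : u = α (v ⊗ w) β }` where `v ∈ M_p(A)`, `w ∈ M_q(B)`,
`α ∈ M_{1,pq}(ℂ)` and `β ∈ M_{pq,1}(ℂ)` (row and column vectors carrying the Euclidean
norm, which is their norm as scalar matrices). -/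
noncomputable def osProjNorm {A B : Type u}
    [AddCommGroup A] [Module ℂ A] [AddCommGroup B] [Module ℂ B]
    (NA : ∀ p : ℕ, Matrix (Fin p) (Fin p) A → ℝ)
    (NB : ∀ q : ℕ, Matrix (Fin q) (Fin q) B → ℝ) (u : A ⊗[ℂ] B) : ℝ :=
  sInf { r : ℝ | ∃ (p q : ℕ) (α : Fin p × Fin q → ℂ) (v : Matrix (Fin p) (Fin p) A)
      (w : Matrix (Fin q) (Fin q) B) (β : Fin p × Fin q → ℂ),
      u = ∑ ik : Fin p × Fin q, ∑ jl : Fin p × Fin q,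
            (α ik * β jl) • (v ik.1 jl.1 ⊗ₜ[ℂ] w ik.2 jl.2) ∧
      r = Real.sqrt (∑ ik, ‖α ik‖ ^ 2) * NA p v * NB q w *
            Real.sqrt (∑ jl, ‖β jl‖ ^ 2) }

/-- `X` is a completion of the algebraic tensor product `A ⊗ B` with respect to the
norm `ν`, via the (necessarily isometric) dense embedding `ι`, and the multiplication and
involution of `X` are the canonical ones induced from `A` and `B`.  Applied with
`ν = osProjNorm NA NB` (for the canonical matrix C⋆-norms `NA`, `NB`) this characterizes
the Banach `*`-algebra `A ⊗̂ B` (the operator space projective tensor product) up to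
isometric `*`-isomorphism; applied with `ν = bsProjNorm` it characterizes the Banach
space projective tensor product `A ⊗_γ B`. -/
structure IsTensorCompletion {A B : Type u} [NonUnitalRing A] [StarRing A] [Module ℂ A]
    [NonUnitalRing B] [StarRing B] [Module ℂ B] (ν : A ⊗[ℂ] B → ℝ)
    (X : Type u) [NonUnitalNormedRing X] [StarRing X] [NormedSpace ℂ X] [CompleteSpace X]
    (ι : A ⊗[ℂ] B →ₗ[ℂ] X) : Prop where
  norm_eq : ∀ u, ‖ι u‖ = ν u
  dense : DenseRange ι
  mul_tmul : ∀ (a c : A) (b d : B),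
    ι (a ⊗ₜ[ℂ] b) * ι (c ⊗ₜ[ℂ] d) = ι ((a * c) ⊗ₜ[ℂ] (b * d))
  star_tmul : ∀ (a : A) (b : B), star (ι (a ⊗ₜ[ℂ] b)) = ι (star a ⊗ₜ[ℂ] star b)

/-- The product ideal `S ⊗̂ T`: the closure in `X` (a completion of `A ⊗ B`) of the span of
elementary tensors `a ⊗ b` with `a ∈ S`, `b ∈ T`. -/
def tensorIdeal {A B : Type u} [NonUnitalRing A] [StarRing A] [Module ℂ A]
    [NonUnitalRing B] [StarRing B] [Module ℂ B]
    {X : Type u} [NonUnitalNormedRing X] [StarRing X] [NormedSpace ℂ X] [CompleteSpace X]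
    (ι : A ⊗[ℂ] B →ₗ[ℂ] X) (S : Set A) (T : Set B) : Set X :=
  closure (ι '' (Submodule.span ℂ (Set.image2 (fun a b => a ⊗ₜ[ℂ] b) S T)))

/-- A closed prime (two-sided) ideal of a Banach algebra: a proper closed two-sided ideal `K`
such that whenever the product of two closed two-sided ideals is contained in `K`, one of them
is contained in `K`. -/
def IsClosedPrimeIdeal {Y : Type u} [NonUnitalNormedRing Y] (K : TwoSidedIdeal Y) : Prop :=
  IsClosed (K : Set Y) ∧ (K : Set Y) ≠ Set.univ ∧
    ∀ I J : TwoSidedIdeal Y, IsClosed (I : Set Y) → IsClosed (J : Set Y) →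
      (∀ x ∈ I, ∀ y ∈ J, x * y ∈ K) → (I : Set Y) ⊆ (K : Set Y) ∨ (J : Set Y) ⊆ (K : Set Y)

/-- An irreducible continuous `*`-representation of a Banach `*`-algebra `Y` on a complex
Hilbert space. -/
structure IrreducibleRepOn (Y : Type u)
    [NonUnitalNormedRing Y] [StarRing Y] [NormedSpace ℂ Y] where
  H : Type u
  [normH : NormedAddCommGroup H]
  [ipsH : InnerProductSpace ℂ H]
  [csH : CompleteSpace H]
  π : Y →⋆ₙₐ[ℂ] (H →L[ℂ] H)
  continuous : Continuous π
  nonzero : ∃ y, π y ≠ 0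
  irreducible : ∀ S : Submodule ℂ H, IsClosed (S : Set H) →
    (∀ y : Y, ∀ v ∈ S, π y v ∈ S) → S = ⊥ ∨ S = ⊤

/-- A primitive ideal: the kernel of an irreducible `*`-representation. -/
def IsPrimitiveIdeal {Y : Type u} [NonUnitalNormedRing Y] [StarRing Y] [NormedSpace ℂ Y]
    (K : TwoSidedIdeal Y) : Prop :=
  ∃ ρ : IrreducibleRepOn Y, ∀ y, y ∈ K ↔ ρ.π y = 0

/-- A subset `K` of a ring is modular (as an ideal) if there is a relative unit `e`
with `x * e - x ∈ K` and `e * x - x ∈ K` for every `x`. -/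
def IsModularIdealSet {Y : Type u} [NonUnitalRing Y] (K : Set Y) : Prop :=
  ∃ e : Y, ∀ x : Y, x * e - x ∈ K ∧ e * x - x ∈ K

/-- A maximal modular (two-sided) ideal: a modular ideal which is proper and maximal among
proper two-sided ideals. -/
def IsMaximalModularIdeal {Y : Type u} [NonUnitalRing Y] (K : TwoSidedIdeal Y) : Prop :=
  IsModularIdealSet (K : Set Y) ∧ (K : Set Y) ≠ Set.univ ∧
    ∀ L : TwoSidedIdeal Y, (K : Set Y) ⊆ (L : Set Y) →
      (L : Set Y) = (K : Set Y) ∨ (L : Set Y) = Set.univ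

/-- The operator norm of a `p × p` matrix of bounded operators on a Hilbert space `H`,
viewed as an operator on the `ℓ²`-direct sum `H ⊕ ⋯ ⊕ H`. -/
noncomputable def opMatrixNorm {H : Type u} [NormedAddCommGroup H] [InnerProductSpace ℂ H]
    {p : ℕ} (T : Matrix (Fin p) (Fin p) (H →L[ℂ] H)) : ℝ :=
  sSup { r : ℝ | ∃ x : Fin p → H, (∑ i, ‖x i‖ ^ 2) ≤ 1 ∧
      r = Real.sqrt (∑ i, ‖∑ j, (T i j) (x j)‖ ^ 2) }

/-- An operator algebra structure on a Banach algebra `Y`: a bicontinuous algebra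
homomorphism of `Y` into the bounded operators on some Hilbert space. -/
structure OperatorAlgebraEmbedding (Y : Type u) [NonUnitalNormedRing Y] [NormedSpace ℂ Y] where
  H : Type u
  [normH : NormedAddCommGroup H]
  [ipsH : InnerProductSpace ℂ H]
  [csH : CompleteSpace H]
  ρ : Y →ₙₐ[ℂ] (H →L[ℂ] H)
  c : ℝ
  C : ℝ
  c_pos : 0 < c
  lower : ∀ y, c * ‖y‖ ≤ ‖ρ y‖
  upper : ∀ y, ‖ρ y‖ ≤ C * ‖y‖

/-- The matrix norms on `Y` induced by an operator algebra embedding, giving `Y` its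
operator space structure: the norm of `v ∈ M_p(Y)` is the operator norm of the matrix
of operators obtained by applying the embedding entrywise. -/
noncomputable def OperatorAlgebraEmbedding.matrixNorm {Y : Type u}
    [NonUnitalNormedRing Y] [NormedSpace ℂ Y] (e : OperatorAlgebraEmbedding Y)
    (p : ℕ) (v : Matrix (Fin p) (Fin p) Y) : ℝ :=
  letI := e.normH; letI := e.ipsH
  opMatrixNorm (v.map e.ρ)

/-- The Banach space projective tensor norm `‖·‖_γ` on the algebraic tensor product. -/
noncomputable def bsProjNorm {A B : Type u} [NonUnitalNormedRing A] [NormedSpace ℂ A]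
    [NonUnitalNormedRing B] [NormedSpace ℂ B] (u : A ⊗[ℂ] B) : ℝ :=
  sInf { r : ℝ | ∃ (n : ℕ) (a : Fin n → A) (b : Fin n → B),
      u = ∑ i, a i ⊗ₜ[ℂ] b i ∧ r = ∑ i, ‖a i‖ * ‖b i‖ }

/-- A C⋆-algebra `A` is subhomogeneous if there is `n : ℕ` bounding the (finite)
dimensions of all its irreducible `*`-representations. -/
def IsSubhomogeneous (A : Type u) [NonUnitalCStarAlgebra A] : Prop :=
  ∃ n : ℕ, ∀ ρ : IrreducibleRepOn A,
    letI := ρ.normH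
    letI := ρ.ipsH
    FiniteDimensional ℂ ρ.H ∧ Module.finrank ℂ ρ.H ≤ n

/-!
Let `K` be a proper closed ideal of `X`. A pure state `φ` of `A` is excised in the sense of
Akemann, Anderson and Pedersen: some contractions `e` satisfy `e * a * e ≈ φ a • (e * e)`, and act
as units on elements `e₁` with `φ e₁ ≠ 0`. If `f`, `f₁` are the same for a pure state `ψ` of `B`,
then `(e ⊗ f) * k * (e ⊗ f) ≈ (φ ⊗ ψ) k • (e ⊗ f) ^ 2` for `k ∈ K`, so that `e₁ ⊗ f₁ ∈ K` as soon
as `(φ ⊗ ψ) k ≠ 0`. A proper closed left ideal of a C⋆-algebra is annihilated by a pure state, so if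
this happened for every pair `(φ, ψ)`, then `K` would contain all elementary tensors. Hence
`φ ⊗ ψ` annihilates `K` for some `φ` and `ψ`, and so does the tensor product of their GNS
representations, which extends to `X` since C⋆-norms on matrix algebras over a C⋆-algebra are
unique. An irreducible representation of the C⋆-algebra which it generates is then the required one.

The involution of `X` is not assumed to be continuous. It differs from the continuous extension of
the canonical involution by an automorphism `θ`, and representations do not see the difference: if
`x → 0` and `θ x → y`, then multiplication by `y` is quasinilpotent by Hadamard's three circles
theorem, so that `y` is annihilated by every representation.
-/

section CStarNorm

section SelfAdjoint

variable {M : Type*} [NonUnitalCStarAlgebra M] {h : M}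

lemma cfcₙ_real_eq_mul (hh : IsSelfAdjoint h) {f : ℝ → ℝ} (hf : Continuous f) (hf₀ : f 0 = 0) :
    cfcₙ (fun s ↦ s * f s) h = h * cfcₙ f h := by
  rw [cfcₙ_mul (fun s ↦ s) f h (by fun_prop) rfl hf.continuousOn hf₀, cfcₙ_id' ℝ h]

lemma abs_le_norm_of_mem_quasispectrum (hh : IsSelfAdjoint h) {s : ℝ}
    (hs : s ∈ quasispectrum ℝ h) : |s| ≤ ‖h‖ :=
  NonUnitalIsometricContinuousFunctionalCalculus.norm_quasispectrum_le h hs hh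

-- `w = √(1 - h²) - 1`, so that `h ± i (1 + w)` are unitary in the unitization.
lemma exists_commute_sq_add_sq_eq_zero (hh : IsSelfAdjoint h) (hnorm : ‖h‖ ≤ 1) :
    ∃ w : M, IsSelfAdjoint w ∧ Commute h w ∧ h * h + w * w + (w + w) = 0 := by
  let f : ℝ → ℝ := fun s ↦ √(1 - s ^ 2) - 1
  have : Continuous f := by fun_prop
  have : f 0 = 0 := by simp [f]
  have hcomm : Commute h (cfcₙ f h) := by
    simpa only [cfcₙ_id' ℝ h] using cfcₙ_commute_cfcₙ (fun s : ℝ ↦ s) f h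
  refine ⟨cfcₙ f h, cfcₙ_predicate f h, hcomm, ?_⟩
  have hsq : h * h = cfcₙ (fun s : ℝ ↦ s * s) h := by
    rw [cfcₙ_real_eq_mul hh (f := fun s ↦ s) continuous_id rfl, cfcₙ_id' ℝ h]
  rw [hsq, ← cfcₙ_mul f f h, ← cfcₙ_add f f h, ← cfcₙ_add .., ← cfcₙ_add .., ← cfcₙ_zero ℝ h]
  refine cfcₙ_congr fun s hs ↦ ?_
  have hs_sq : 0 ≤ 1 - s ^ 2 := sub_nonneg.2 <|
    (sq_le_one_iff_abs_le_one s).2 ((abs_le_norm_of_mem_quasispectrum hh hs).trans hnorm)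
  simp only [f, Pi.zero_apply]
  linear_combination Real.mul_self_sqrt hs_sq

end SelfAdjoint

lemma div_sq_max_abs_le_inv {c : ℝ} (hc : 0 < c) (s : ℝ) : |s / max |s| c ^ 2| ≤ c⁻¹ := by
  have hmax : 0 < max |s| c := lt_max_of_lt_right hc
  rw [abs_div, abs_of_pos (by positivity : 0 < max |s| c ^ 2), div_le_iff₀ (by positivity),
    inv_mul_eq_div, le_div_iff₀ hc]
  nlinarith [abs_nonneg s, le_max_left |s| c, le_max_right |s| c]

lemma self_mul_div_sq_max_abs_mul {c : ℝ} (hc : 0 < c) (s : ℝ) :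
    s * (s / max |s| c ^ 2 * max (|s| - c) 0) = max (|s| - c) 0 := by
  rcases le_or_gt |s| c with hs | hs
  · simp [hs]
  · have hs₀ : s ≠ 0 := abs_pos.1 (hc.trans hs)
    rw [max_eq_left hs.le, sq_abs]
    field_simp

-- `y n = h⁻ⁿ (|h| - c)₊`, where `s⁻¹` is replaced by a bounded function off `|s| ≥ c`.
lemma exists_seq_eq_mul_succ {M : Type*} [NonUnitalCStarAlgebra M] {h : M}
    (hh : IsSelfAdjoint h) {c : ℝ} (hc : 0 < c) :
    ∃ y : ℕ → M, y 0 = cfcₙ (fun s : ℝ ↦ max (|s| - c) 0) h ∧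
      (∀ n, y n = h * y (n + 1)) ∧ ∀ n, ‖y n‖ ≤ c⁻¹ ^ n * ‖h‖ := by
  let T : ℝ → ℝ := fun s ↦ s / max |s| c ^ 2
  let g : ℝ → ℝ := fun s ↦ max (|s| - c) 0
  have hT : Continuous T := Continuous.div continuous_id (by fun_prop) fun s ↦
    (pow_pos (lt_max_of_lt_right hc) 2).ne'
  have hg : Continuous g := by fun_prop
  have hg₀ : g 0 = 0 := by simp [g, hc.le]
  refine ⟨fun n ↦ cfcₙ (fun s ↦ T s ^ n * g s) h, by simp [g], fun n ↦ ?_, fun n ↦ ?_⟩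
  · rw [← cfcₙ_real_eq_mul hh (by fun_prop) (by simp [hg₀])]
    refine congrArg (cfcₙ · h) (funext fun s ↦ ?_)
    linear_combination (-T s ^ n) * self_mul_div_sq_max_abs_mul hc s
  · refine norm_cfcₙ_le fun s hs ↦ ?_
    have hgs : |g s| ≤ ‖h‖ := by
      rw [abs_of_nonneg (le_max_right _ _)]
      exact max_le (by linarith [abs_le_norm_of_mem_quasispectrum hh hs]) (norm_nonneg h)
    rw [norm_mul, norm_pow]
    exact mul_le_mul (pow_le_pow_left₀ (norm_nonneg _) (div_sq_max_abs_le_inv hc s) n) hgs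
      (norm_nonneg _) (by positivity)

lemma norm_le_of_cfcₙ_tail_eq_zero {M : Type*} [NonUnitalCStarAlgebra M] {h : M}
    (hh : IsSelfAdjoint h) {c : ℝ} (hc : 0 ≤ c)
    (hzero : cfcₙ (fun s : ℝ ↦ max (|s| - c) 0) h = 0) : ‖h‖ ≤ c := by
  rw [← cfcₙ_id' ℝ h]
  refine norm_cfcₙ_le fun s hs ↦ ?_
  rw [← cfcₙ_const_zero ℝ h] at hzero
  have hs_max : max (|s| - c) 0 = 0 := (cfcₙ_eq_cfcₙ_iff_eqOn hh (by fun_prop)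
    (by simp [hc]) (by fun_prop) rfl).1 hzero hs
  exact sub_nonpos.1 (hs_max ▸ le_max_left _ _)

namespace IsCStarNorm

section Algebraic

variable {M : Type*} [NonUnitalRing M] [StarRing M] [Module ℂ M] {N : M → ℝ}

lemma map_zero (hN : IsCStarNorm N) : N 0 = 0 := by
  simpa using hN.smul_eq 0 0

lemma nonneg (hN : IsCStarNorm N) (x : M) : 0 ≤ N x := by
  have h := hN.add_le x ((-1 : ℂ) • x)
  rw [hN.smul_eq, neg_one_smul, add_neg_cancel, hN.map_zero, norm_neg, norm_one, one_mul] at h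
  linarith

lemma eq_of_star_mul_self_eq (hN : IsCStarNorm N) {x y : M} (h : star x * x = star y * y) :
    N x = N y := by
  rw [← mul_self_inj_of_nonneg (hN.nonneg x) (hN.nonneg y), ← hN.star_mul_self,
    ← hN.star_mul_self, h]

end Algebraic

section Unitary

variable {M : Type*} [NonUnitalRing M] [StarRing M] [Module ℂ M] [StarModule ℂ M]
  [IsScalarTower ℂ M M] [SMulCommClass ℂ M M] {N : M → ℝ}

-- The element `h + c (1 + w)` is unitary in the unitization of `M`.
lemma map_unitary_mul (hN : IsCStarNorm N) {h w : M} (hh : IsSelfAdjoint h)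
    (hw : IsSelfAdjoint w) (hcomm : Commute h w) (hrel : h * h + w * w + (w + w) = 0)
    {c : ℂ} (hc : star c = -c) (hc_sq : c * c = -1) (x : M) :
    N (h * x + c • (x + w * x)) = N x := by
  refine hN.eq_of_star_mul_self_eq ?_
  have smul_smul_c (y : M) : c • c • y = -y := by rw [smul_smul, hc_sq, neg_one_smul]
  have hsq : h * h = -(w * w) - (w + w) := by
    rw [eq_sub_iff_add_eq, eq_neg_iff_add_eq_zero, ← hrel]; abel
  have hsq_mul (y : M) : h * (h * y) = -(w * (w * y)) - (w * y + w * y) := by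
    rw [← mul_assoc, hsq]; simp only [sub_mul, neg_mul, add_mul, mul_assoc]
  have hcomm_mul (y : M) : h * (w * y) = w * (h * y) := by
    rw [← mul_assoc, hcomm.eq, mul_assoc]
  simp only [star_add, star_mul, star_smul, hw.star_eq, hh.star_eq, hc, add_mul, mul_add,
    smul_add, neg_smul, neg_mul, smul_mul_assoc, mul_smul_comm, mul_assoc, hsq_mul, hcomm_mul,
    mul_sub, mul_neg]
  simp only [smul_neg, smul_smul_c]
  abel

lemma le_one_of_sq_add_sq_eq_zero (hN : IsCStarNorm N) {h w : M} (hh : IsSelfAdjoint h)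
    (hw : IsSelfAdjoint w) (hcomm : Commute h w) (hrel : h * h + w * w + (w + w) = 0) :
    N h ≤ 1 := by
  have hpos := hN.map_unitary_mul hh hw hcomm hrel (c := Complex.I) (by simp) (by simp) h
  have hneg := hN.map_unitary_mul hh hw hcomm hrel (c := -Complex.I) (by simp) (by simp) h
  have hsq : N (h * h) = N h * N h := by simpa only [hh.star_eq] using hN.star_mul_self h
  have hadd := hN.add_le (h * h + Complex.I • (h + w * h)) (h * h + (-Complex.I) • (h + w * h))
  have hsum : h * h + Complex.I • (h + w * h) + (h * h + (-Complex.I) • (h + w * h)) =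
      (2 : ℂ) • (h * h) := by
    rw [two_smul, neg_smul]; abel
  rw [hsum, hN.smul_eq, hpos, hneg, hsq, Complex.norm_two] at hadd
  by_contra! hlt
  nlinarith

end Unitary

section CStarAlgebra

variable {M : Type*} [NonUnitalCStarAlgebra M] {N : M → ℝ}

lemma le_norm_of_isSelfAdjoint (hN : IsCStarNorm N) {h : M} (hh : IsSelfAdjoint h) :
    N h ≤ ‖h‖ := by
  rcases eq_or_ne h 0 with rfl | h₀
  · rw [hN.map_zero, norm_zero]
  have hpos : 0 < ‖h‖ := norm_pos_iff.2 h₀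
  obtain ⟨w, hw, hcomm, hrel⟩ := exists_commute_sq_add_sq_eq_zero
    (h := ‖h‖⁻¹ • h) ((IsSelfAdjoint.all ‖h‖⁻¹).smul hh) (by simp [norm_smul, hpos.ne'])
  have hle := hN.le_one_of_sq_add_sq_eq_zero ((IsSelfAdjoint.all ‖h‖⁻¹).smul hh) hw hcomm hrel
  rwa [← Complex.coe_smul, hN.smul_eq, Complex.norm_real, norm_inv, norm_norm,
    inv_mul_le_iff₀ hpos, mul_one] at hle

lemma le_norm (hN : IsCStarNorm N) (x : M) : N x ≤ ‖x‖ := by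
  have h := hN.le_norm_of_isSelfAdjoint (IsSelfAdjoint.star_mul_self x)
  rwa [hN.star_mul_self, CStarRing.norm_star_mul_self,
    ← mul_self_le_mul_self_iff (hN.nonneg x) (norm_nonneg x)] at h

lemma norm_le_of_isSelfAdjoint (hN : IsCStarNorm N) {h : M} (hh : IsSelfAdjoint h) :
    ‖h‖ ≤ N h := by
  refine le_of_forall_gt_imp_ge_of_dense fun c hc ↦ ?_
  have hNh := hN.nonneg h
  have hc₀ : 0 < c := hNh.trans_lt hc
  obtain ⟨y, hy_zero, hy_succ, hy_norm⟩ := exists_seq_eq_mul_succ hh hc₀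
  have hpow (n : ℕ) : N (y 0) ≤ N h ^ n * N (y n) := by
    induction n with
    | zero => simp
    | succ n ih =>
      refine ih.trans ?_
      rw [pow_succ, mul_assoc]
      exact mul_le_mul_of_nonneg_left (hy_succ n ▸ hN.mul_le _ _) (pow_nonneg hNh n)
  have hgeom (n : ℕ) : N (y 0) ≤ (N h / c) ^ n * ‖h‖ := by
    refine (hpow n).trans ?_
    rw [div_eq_mul_inv, mul_pow, mul_assoc]
    exact mul_le_mul_of_nonneg_left ((hN.le_norm _).trans (hy_norm n)) (pow_nonneg hNh n)
  have hlim : Filter.Tendsto (fun n : ℕ ↦ (N h / c) ^ n * ‖h‖) Filter.atTop (nhds 0) := by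
    simpa only [zero_mul] using (tendsto_pow_atTop_nhds_zero_of_lt_one
      (div_nonneg hNh hc₀.le) ((div_lt_one hc₀).2 hc)).mul_const ‖h‖
  have hy₀ : y 0 = 0 := hN.eq_zero_of _ <| (ge_of_tendsto' hlim hgeom).antisymm (hN.nonneg _)
  exact norm_le_of_cfcₙ_tail_eq_zero hh hc₀.le (hy_zero ▸ hy₀)

theorem eq_norm (hN : IsCStarNorm N) (x : M) : N x = ‖x‖ := by
  refine (hN.le_norm x).antisymm ?_
  have h := hN.norm_le_of_isSelfAdjoint (IsSelfAdjoint.star_mul_self x)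
  rwa [hN.star_mul_self, CStarRing.norm_star_mul_self,
    ← mul_self_le_mul_self_iff (norm_nonneg x) (hN.nonneg x)] at h

end CStarAlgebra

end IsCStarNorm

end CStarNorm

section Amplification

variable {A : Type*} [NonUnitalCStarAlgebra A] {n : Type*} [Fintype n]
  {H : Type*} [NormedAddCommGroup H] [InnerProductSpace ℂ H] [CompleteSpace H]

/-- The amplification `M_n(A) → B(H ⊕ ⋯ ⊕ H)` of a representation `ρ : A → B(H)`, which
applies `ρ` entrywise. -/
def amplification (ρ : A →⋆ₙₐ[ℂ] (H →L[ℂ] H)) :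
    CStarMatrix n n A →⋆ₙₐ[ℂ] (PiLp 2 (fun _ : n ↦ H) →L[ℂ] PiLp 2 (fun _ : n ↦ H)) where
  toFun v := (PiLp.continuousLinearEquiv 2 ℂ (fun _ : n ↦ H)).symm.toContinuousLinearMap ∘L
    (ContinuousLinearMap.pi fun i ↦ ∑ j, ρ (v i j) ∘L ContinuousLinearMap.proj j) ∘L
    (PiLp.continuousLinearEquiv 2 ℂ (fun _ : n ↦ H)).toContinuousLinearMap
  map_smul' c v := by ext x i; simp [Finset.smul_sum]
  map_zero' := by ext x i; simp
  map_add' v w := by ext x i; simp [Finset.sum_add_distrib]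
  map_mul' v w := by
    ext x i
    simp only [ContinuousLinearMap.comp_apply, ContinuousLinearEquiv.coe_coe,
      PiLp.continuousLinearEquiv_symm_apply, PiLp.continuousLinearEquiv_apply,
      ContinuousLinearMap.pi_apply, sum_apply, ContinuousLinearMap.proj_apply,
      mul_apply_eq_comp, CStarMatrix.mul_apply, map_sum, map_mul]
    exact Finset.sum_comm
  map_star' v := by
    rw [ContinuousLinearMap.star_eq_adjoint, ContinuousLinearMap.eq_adjoint_iff]
    intro x y
    simp only [PiLp.inner_apply, ContinuousLinearMap.comp_apply, ContinuousLinearEquiv.coe_coe,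
      PiLp.continuousLinearEquiv_symm_apply, PiLp.continuousLinearEquiv_apply,
      ContinuousLinearMap.pi_apply, sum_apply, ContinuousLinearMap.proj_apply, sum_inner,
      inner_sum, CStarMatrix.star_apply, map_star, ContinuousLinearMap.star_eq_adjoint,
      ContinuousLinearMap.adjoint_inner_left]
    exact Finset.sum_comm

lemma amplification_apply (ρ : A →⋆ₙₐ[ℂ] (H →L[ℂ] H)) (v : CStarMatrix n n A)
    (x : PiLp 2 (fun _ : n ↦ H)) (i : n) :
    amplification ρ v x i = ∑ j, ρ (v i j) (x j) := by
  simp [amplification]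

lemma IsCStarNorm.eq_norm_ofMatrix [PartialOrder A] [StarOrderedRing A]
    {N : Matrix n n A → ℝ} (hN : IsCStarNorm N) (v : Matrix n n A) :
    N v = ‖CStarMatrix.ofMatrix v‖ := by
  classical
  exact eq_norm (M := CStarMatrix n n A) (N := N)
    ⟨hN.add_le, hN.smul_eq, hN.eq_zero_of, hN.mul_le, hN.star_mul_self⟩ v

lemma IsCStarNorm.map_star {N : Matrix n n A → ℝ} (hN : IsCStarNorm N) (v : Matrix n n A) :
    N (star v) = N v := by
  classical
  let := CStarAlgebra.spectralOrder A
  have := CStarAlgebra.spectralOrderedRing A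
  rw [hN.eq_norm_ofMatrix, hN.eq_norm_ofMatrix]
  exact norm_star (CStarMatrix.ofMatrix v)

lemma IsCStarNorm.sum_norm_sq_le {N : Matrix n n A → ℝ} (hN : IsCStarNorm N)
    (ρ : A →⋆ₙₐ[ℂ] (H →L[ℂ] H)) (v : Matrix n n A) (x : n → H) :
    ∑ i, ‖∑ j, ρ (v i j) (x j)‖ ^ 2 ≤ N v ^ 2 * ∑ j, ‖x j‖ ^ 2 := by
  classical
  let := CStarAlgebra.spectralOrder A
  have := CStarAlgebra.spectralOrderedRing A
  have hnorm := NonUnitalStarAlgHom.norm_apply_le (amplification ρ) (CStarMatrix.ofMatrix v)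
  have hle := (amplification ρ (.ofMatrix v)).le_of_opNorm_le hnorm (WithLp.toLp 2 x)
  have hsq := pow_le_pow_left₀ (norm_nonneg _) hle 2
  simpa only [← hN.eq_norm_ofMatrix, mul_pow, PiLp.norm_sq_eq_of_L2, amplification_apply,
    CStarMatrix.ofMatrix_apply] using hsq

lemma IsCStarNorm.map_const_one {N : Matrix (Fin 1) (Fin 1) A → ℝ} (hN : IsCStarNorm N) (a : A) :
    N (.of fun _ _ ↦ a) = ‖a‖ := by
  refine eq_norm (N := fun a : A ↦ N (.of fun _ _ ↦ a))
    ⟨fun x y ↦ hN.add_le _ _, fun c x ↦ hN.smul_eq c _, fun x hx ↦ ?_, fun x y ↦ ?_, fun x ↦ ?_⟩ a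
  · exact congrFun₂ (hN.eq_zero_of _ hx) 0 0
  · convert hN.mul_le (.of fun _ _ ↦ x) (.of fun _ _ ↦ y) using 2
    ext; simp [Matrix.mul_apply]
  · convert hN.star_mul_self (.of fun _ _ ↦ x) using 2
    ext; simp [Matrix.mul_apply]

end Amplification

section OperatorMatrix

variable {H : Type*} [NormedAddCommGroup H] [NormedSpace ℂ H]

lemma norm_sum_smul_le_of_sum_norm_sq_le {m n : Type*} [Fintype m] [Fintype n]
    (T : m → n → H →L[ℂ] H) {C : ℝ} (hC : 0 ≤ C)
    (hT : ∀ z : n → H, ∑ i, ‖∑ j, T i j (z j)‖ ^ 2 ≤ C ^ 2 * ∑ j, ‖z j‖ ^ 2)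
    (α : m → ℂ) (β : n → ℂ) :
    ‖∑ i, ∑ j, (α i * β j) • T i j‖ ≤ √(∑ i, ‖α i‖ ^ 2) * C * √(∑ j, ‖β j‖ ^ 2) := by
  refine ContinuousLinearMap.opNorm_le_bound _ (by positivity) fun x ↦ ?_
  let y : m → H := fun i ↦ ∑ j, T i j (β j • x)
  have happly : (∑ i, ∑ j, (α i * β j) • T i j) x = ∑ i, α i • y i := by
    simp [y, mul_smul, Finset.smul_sum]
  have hy : ∑ i, ‖y i‖ ^ 2 ≤ C ^ 2 * (∑ j, ‖β j‖ ^ 2) * ‖x‖ ^ 2 := by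
    simpa only [norm_smul, mul_pow, ← Finset.sum_mul, ← mul_assoc] using hT fun j ↦ β j • x
  calc ‖(∑ i, ∑ j, (α i * β j) • T i j) x‖
      ≤ ∑ i, ‖α i‖ * ‖y i‖ := by
        rw [happly]
        exact (norm_sum_le _ _).trans_eq (Finset.sum_congr rfl fun _ _ ↦ norm_smul _ _)
    _ ≤ √(∑ i, ‖α i‖ ^ 2) * √(∑ i, ‖y i‖ ^ 2) := Real.sum_mul_le_sqrt_mul_sqrt _ _ _
    _ ≤ √(∑ i, ‖α i‖ ^ 2) * √(C ^ 2 * (∑ j, ‖β j‖ ^ 2) * ‖x‖ ^ 2) := by gcongr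
    _ = √(∑ i, ‖α i‖ ^ 2) * C * √(∑ j, ‖β j‖ ^ 2) * ‖x‖ := by
        rw [Real.sqrt_mul (by positivity), Real.sqrt_mul (by positivity), Real.sqrt_sq hC,
          Real.sqrt_sq (norm_nonneg x)]
        ring

end OperatorMatrix

section OsProjNorm

lemma exists_sum_smul_tmul_eq {A B : Type*} [AddCommGroup A] [Module ℂ A] [AddCommGroup B]
    [Module ℂ B]
    (u : A ⊗[ℂ] B) :
    ∃ (p q : ℕ) (α : Fin p × Fin q → ℂ) (v : Matrix (Fin p) (Fin p) A)
      (w : Matrix (Fin q) (Fin q) B) (β : Fin p × Fin q → ℂ),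
      u = ∑ ik, ∑ jl, (α ik * β jl) • (v ik.1 jl.1 ⊗ₜ[ℂ] w ik.2 jl.2) := by
  obtain ⟨k, a, b, rfl⟩ := TensorProduct.exists_sum_tmul_eq u
  refine ⟨k, k, fun ij ↦ if ij.1 = ij.2 then 1 else 0, .diagonal a, .diagonal b,
    fun ij ↦ if ij.1 = ij.2 then 1 else 0, ?_⟩
  simp [Fintype.sum_prod_type, Matrix.diagonal_apply, TensorProduct.ite_tmul]

variable {A B : Type u} [NonUnitalCStarAlgebra A] [NonUnitalCStarAlgebra B]

/-- The linear map `a ⊗ b ↦ ρ₁ a * ρ₂ b`, the product of two (usually commuting)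
representations. -/
def mulLift {A B R : Type*} [AddCommMonoid A] [Module ℂ A] [AddCommMonoid B] [Module ℂ B]
    [NonUnitalNonAssocSemiring R] [Module ℂ R] [IsScalarTower ℂ R R] [SMulCommClass ℂ R R]
    (ρ₁ : A →ₗ[ℂ] R) (ρ₂ : B →ₗ[ℂ] R) : A ⊗[ℂ] B →ₗ[ℂ] R :=
  LinearMap.mul' ℂ R ∘ₗ TensorProduct.map ρ₁ ρ₂

@[simp]
lemma mulLift_tmul {A B R : Type*} [AddCommMonoid A] [Module ℂ A] [AddCommMonoid B] [Module ℂ B]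
    [NonUnitalNonAssocSemiring R] [Module ℂ R] [IsScalarTower ℂ R R] [SMulCommClass ℂ R R]
    (ρ₁ : A →ₗ[ℂ] R) (ρ₂ : B →ₗ[ℂ] R) (a : A) (b : B) :
    mulLift ρ₁ ρ₂ (a ⊗ₜ b) = ρ₁ a * ρ₂ b := rfl

variable {NA : ∀ p : ℕ, Matrix (Fin p) (Fin p) A → ℝ} {NB : ∀ q : ℕ, Matrix (Fin q) (Fin q) B → ℝ}

lemma osProjNorm_sum_le (hNA : ∀ p, IsCStarNorm (NA p)) (hNB : ∀ q, IsCStarNorm (NB q))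
    {p q : ℕ} (α : Fin p × Fin q → ℂ) (v : Matrix (Fin p) (Fin p) A)
    (w : Matrix (Fin q) (Fin q) B) (β : Fin p × Fin q → ℂ) :
    osProjNorm NA NB (∑ ik, ∑ jl, (α ik * β jl) • (v ik.1 jl.1 ⊗ₜ[ℂ] w ik.2 jl.2)) ≤
      √(∑ ik, ‖α ik‖ ^ 2) * NA p v * NB q w * √(∑ jl, ‖β jl‖ ^ 2) := by
  refine csInf_le ⟨0, ?_⟩ ⟨p, q, α, v, w, β, rfl, rfl⟩
  rintro r ⟨p, q, α, v, w, β, -, rfl⟩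
  have hA := (hNA p).nonneg v
  have hB := (hNB q).nonneg w
  positivity

lemma le_osProjNorm {u : A ⊗[ℂ] B} {r : ℝ}
    (h : ∀ (p q : ℕ) (α : Fin p × Fin q → ℂ) (v : Matrix (Fin p) (Fin p) A)
      (w : Matrix (Fin q) (Fin q) B) (β : Fin p × Fin q → ℂ),
      u = ∑ ik, ∑ jl, (α ik * β jl) • (v ik.1 jl.1 ⊗ₜ[ℂ] w ik.2 jl.2) →
      r ≤ √(∑ ik, ‖α ik‖ ^ 2) * NA p v * NB q w * √(∑ jl, ‖β jl‖ ^ 2)) :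
    r ≤ osProjNorm NA NB u := by
  obtain ⟨p, q, α, v, w, β, hu⟩ := exists_sum_smul_tmul_eq u
  refine le_csInf ⟨_, p, q, α, v, w, β, hu, rfl⟩ ?_
  rintro _ ⟨p, q, α, v, w, β, hu, rfl⟩
  exact h p q α v w β hu

lemma osProjNorm_tmul_le (hNA : ∀ p, IsCStarNorm (NA p)) (hNB : ∀ q, IsCStarNorm (NB q))
    (a : A) (b : B) : osProjNorm NA NB (a ⊗ₜ b) ≤ ‖a‖ * ‖b‖ := by
  simpa [(hNA 1).map_const_one, (hNB 1).map_const_one] using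
    osProjNorm_sum_le hNA hNB (p := 1) (q := 1) (fun _ ↦ 1) (.of fun _ _ ↦ a)
      (.of fun _ _ ↦ b) (fun _ ↦ 1)

lemma sum_norm_sq_tmul_le {H : Type*} [NormedAddCommGroup H] [InnerProductSpace ℂ H]
    [CompleteSpace H] {m n : Type*} [Fintype m] [Fintype n]
    {N : Matrix m m A → ℝ} {N' : Matrix n n B → ℝ} (hN : IsCStarNorm N) (hN' : IsCStarNorm N')
    (ρ₁ : A →⋆ₙₐ[ℂ] (H →L[ℂ] H)) (ρ₂ : B →⋆ₙₐ[ℂ] (H →L[ℂ] H))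
    (v : Matrix m m A) (w : Matrix n n B) (z : m × n → H) :
    ∑ ik : m × n, ‖∑ jl : m × n, (ρ₁ (v ik.1 jl.1) * ρ₂ (w ik.2 jl.2)) (z jl)‖ ^ 2 ≤
      (N v * N' w) ^ 2 * ∑ jl, ‖z jl‖ ^ 2 := by
  let y : m → n → H := fun j k ↦ ∑ l, ρ₂ (w k l) (z (j, l))
  calc ∑ ik : m × n, ‖∑ jl : m × n, (ρ₁ (v ik.1 jl.1) * ρ₂ (w ik.2 jl.2)) (z jl)‖ ^ 2
      = ∑ k, ∑ i, ‖∑ j, ρ₁ (v i j) (y j k)‖ ^ 2 := by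
        simp only [y, Fintype.sum_prod_type, map_sum, mul_apply_eq_comp]
        exact Finset.sum_comm
    _ ≤ ∑ k, N v ^ 2 * ∑ j, ‖y j k‖ ^ 2 :=
        Finset.sum_le_sum fun k _ ↦ hN.sum_norm_sq_le ρ₁ v (y · k)
    _ = N v ^ 2 * ∑ j, ∑ k, ‖y j k‖ ^ 2 := by rw [← Finset.mul_sum, Finset.sum_comm]
    _ ≤ N v ^ 2 * ∑ j, N' w ^ 2 * ∑ l, ‖z (j, l)‖ ^ 2 := by
        gcongr with j
        exact hN'.sum_norm_sq_le ρ₂ w fun l ↦ z (j, l)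
    _ = (N v * N' w) ^ 2 * ∑ jl, ‖z jl‖ ^ 2 := by
        rw [← Finset.mul_sum, mul_pow, mul_assoc, Fintype.sum_prod_type]

lemma norm_mulLift_le_osProjNorm {H : Type*} [NormedAddCommGroup H] [InnerProductSpace ℂ H]
    [CompleteSpace H] (hNA : ∀ p, IsCStarNorm (NA p)) (hNB : ∀ q, IsCStarNorm (NB q))
    (ρ₁ : A →⋆ₙₐ[ℂ] (H →L[ℂ] H)) (ρ₂ : B →⋆ₙₐ[ℂ] (H →L[ℂ] H)) (u : A ⊗[ℂ] B) :
    ‖mulLift (ρ₁ : A →ₗ[ℂ] (H →L[ℂ] H)) (ρ₂ : B →ₗ[ℂ] (H →L[ℂ] H)) u‖ ≤ osProjNorm NA NB u := by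
  refine le_osProjNorm fun p q α v w β hu ↦ ?_
  have hle := norm_sum_smul_le_of_sum_norm_sq_le
    (fun ik jl : Fin p × Fin q ↦ ρ₁ (v ik.1 jl.1) * ρ₂ (w ik.2 jl.2))
    (mul_nonneg ((hNA p).nonneg v) ((hNB q).nonneg w))
    (sum_norm_sq_tmul_le (hNA p) (hNB q) ρ₁ ρ₂ v w) α β
  simpa [hu, mul_assoc] using hle

end OsProjNorm

section TensorCompletion

open Filter Topology

lemma isClosed_setOf_tendsto_zero_of_eventually_norm_le {α E F : Type*}
    [SeminormedAddCommGroup E] [SeminormedAddCommGroup F] {l : Filter α} {T : α → E →+ F} {C : ℝ}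
    (hT : ∀ᶠ t in l, ∀ x, ‖T t x‖ ≤ C * ‖x‖) : IsClosed {x | Tendsto (T · x) l (𝓝 0)} := by
  refine isClosed_of_closure_subset fun x hx ↦ NormedAddGroup.tendsto_nhds_zero.2 fun ε hε ↦ ?_
  obtain ⟨y, hy, hxy⟩ := Metric.mem_closure_iff.1 hx (ε / 2 / (|C| + 1)) (by positivity)
  filter_upwards [NormedAddGroup.tendsto_nhds_zero.1 hy (ε / 2) (by positivity), hT]
    with t hty hTt
  rw [dist_eq_norm, lt_div_iff₀ (by positivity)] at hxy
  calc ‖T t x‖ ≤ ‖T t (x - y)‖ + ‖T t y‖ := by rw [map_sub]; exact norm_le_norm_sub_add _ _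
    _ ≤ ‖x - y‖ * (|C| + 1) + ‖T t y‖ := by
        gcongr
        refine (hTt _).trans ?_
        rw [mul_comm]
        gcongr
        linarith [le_abs_self C]
    _ < ε := by linarith

/-- A complex subspace which is a two-sided ideal. -/
structure IsIdealSubmodule {R : Type*} [NonUnitalNonAssocSemiring R] [Module ℂ R]
    (I : Submodule ℂ R) : Prop where
  mul_mem_left : ∀ (a : R) {x : R}, x ∈ I → a * x ∈ I
  mul_mem_right : ∀ (a : R) {x : R}, x ∈ I → x * a ∈ I

namespace IsTensorCompletion

section Basic

variable {A B X : Type u} [NonUnitalRing A] [StarRing A] [Module ℂ A] [NonUnitalRing B]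
  [StarRing B] [Module ℂ B] [NonUnitalNormedRing X] [StarRing X] [NormedSpace ℂ X]
  [CompleteSpace X] {ν : A ⊗[ℂ] B → ℝ} {ι : A ⊗[ℂ] B →ₗ[ℂ] X}

lemma induction_on (hX : IsTensorCompletion ν X ι) {p : X → Prop} (x : X)
    (isClosed : IsClosed {x | p x}) (add : ∀ x y, p x → p y → p (x + y))
    (tmul : ∀ a b, p (ι (a ⊗ₜ b))) : p x :=
  hX.dense.induction_on x isClosed fun u ↦ by
    induction u with
    | zero => simpa using tmul 0 0
    | tmul a b => exact tmul a b
    | add u v hu hv => simpa using add _ _ hu hv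

lemma star_map_smul [StarModule ℂ A] (hX : IsTensorCompletion ν X ι) (c : ℂ)
    (u : A ⊗[ℂ] B) : star (ι (c • u)) = star c • star (ι u) := by
  induction u with
  | zero => simp
  | tmul a b =>
    rw [TensorProduct.smul_tmul', hX.star_tmul, hX.star_tmul, star_smul,
      ← TensorProduct.smul_tmul', map_smul]
  | add u v hu hv => rw [smul_add, map_add, star_add, hu, hv, map_add, star_add, smul_add]

/-- The continuous involution of the completion, extending the canonical involution of the
algebraic tensor product. It is defined independently of `star`, which is not assumed to be
continuous on `X`. -/
def continuousStar [StarModule ℂ A] (hX : IsTensorCompletion ν X ι) : X →SL[starRingEnd ℂ] X :=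
  LinearMap.extendOfNorm (σ₁₂ := starRingEnd ℂ)
    { toFun u := star (ι u), map_add' := by simp, map_smul' := hX.star_map_smul } ι

variable [StarModule ℂ A]

lemma continuousStar_map (hX : IsTensorCompletion ν X ι)
    (hstar : ∀ u, ‖star (ι u)‖ ≤ ‖ι u‖) (u : A ⊗[ℂ] B) :
    hX.continuousStar (ι u) = star (ι u) :=
  LinearMap.extendOfNorm_eq hX.dense ⟨1, fun u ↦ by simpa using hstar u⟩ u

lemma continuousStar_mul (hX : IsTensorCompletion ν X ι) (hstar : ∀ u, ‖star (ι u)‖ ≤ ‖ι u‖)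
    (x y : X) : hX.continuousStar (x * y) = hX.continuousStar y * hX.continuousStar x := by
  induction x using hX.induction_on with
  | isClosed => exact isClosed_eq (by fun_prop) (by fun_prop)
  | add x x' hx hx' => rw [add_mul, map_add, hx, hx', map_add, mul_add]
  | tmul a b =>
    induction y using hX.induction_on with
    | isClosed => exact isClosed_eq (by fun_prop) (by fun_prop)
    | add y y' hy hy' => rw [mul_add, map_add, hy, hy', map_add, add_mul]
    | tmul c d =>
      simp only [hX.mul_tmul, hX.continuousStar_map hstar, hX.star_tmul, star_mul]

lemma continuousStar_continuousStar (hX : IsTensorCompletion ν X ι)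
    (hstar : ∀ u, ‖star (ι u)‖ ≤ ‖ι u‖) (x : X) :
    hX.continuousStar (hX.continuousStar x) = x := by
  induction x using hX.induction_on with
  | isClosed => exact isClosed_eq (by fun_prop) (by fun_prop)
  | add x y hx hy => rw [map_add, map_add, hx, hy]
  | tmul a b => simp only [hX.continuousStar_map hstar, hX.star_tmul, star_star]

end Basic

section Lift

variable {A B X : Type u} [NonUnitalCStarAlgebra A] [NonUnitalCStarAlgebra B]
  [NonUnitalNormedRing X] [StarRing X] [NormedSpace ℂ X] [CompleteSpace X]
  {ν : A ⊗[ℂ] B → ℝ} {ι : A ⊗[ℂ] B →ₗ[ℂ] X}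
  {H : Type*} [NormedAddCommGroup H] [InnerProductSpace ℂ H] [CompleteSpace H]
  {ρ₁ : A →⋆ₙₐ[ℂ] (H →L[ℂ] H)} {ρ₂ : B →⋆ₙₐ[ℂ] (H →L[ℂ] H)}

/-- The extension to the completion of the product `a ⊗ b ↦ ρ₁ a * ρ₂ b` of two
representations. -/
def lift (_ : IsTensorCompletion ν X ι) (ρ₁ : A →⋆ₙₐ[ℂ] (H →L[ℂ] H))
    (ρ₂ : B →⋆ₙₐ[ℂ] (H →L[ℂ] H)) : X →L[ℂ] (H →L[ℂ] H) :=
  (mulLift (ρ₁ : A →ₗ[ℂ] (H →L[ℂ] H)) (ρ₂ : B →ₗ[ℂ] (H →L[ℂ] H))).extendOfNorm ι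

lemma lift_tmul (hX : IsTensorCompletion ν X ι)
    (hle : ∀ u,
      ‖mulLift (ρ₁ : A →ₗ[ℂ] (H →L[ℂ] H)) (ρ₂ : B →ₗ[ℂ] (H →L[ℂ] H)) u‖ ≤ ν u) (a : A) (b : B) :
    hX.lift ρ₁ ρ₂ (ι (a ⊗ₜ b)) = ρ₁ a * ρ₂ b :=
  LinearMap.extendOfNorm_eq hX.dense ⟨1, fun u ↦ by simpa [hX.norm_eq] using hle u⟩ (a ⊗ₜ b)

lemma lift_mul (hX : IsTensorCompletion ν X ι)
    (hle : ∀ u,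
      ‖mulLift (ρ₁ : A →ₗ[ℂ] (H →L[ℂ] H)) (ρ₂ : B →ₗ[ℂ] (H →L[ℂ] H)) u‖ ≤ ν u)
    (hcomm : ∀ a b, Commute (ρ₁ a) (ρ₂ b)) (x y : X) :
    hX.lift ρ₁ ρ₂ (x * y) = hX.lift ρ₁ ρ₂ x * hX.lift ρ₁ ρ₂ y := by
  induction x using hX.induction_on with
  | isClosed => exact isClosed_eq (by fun_prop) (by fun_prop)
  | add x x' hx hx' => rw [add_mul, map_add, hx, hx', map_add, add_mul]
  | tmul a b =>
    induction y using hX.induction_on with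
    | isClosed => exact isClosed_eq (by fun_prop) (by fun_prop)
    | add y y' hy hy' => rw [mul_add, map_add, hy, hy', map_add, mul_add]
    | tmul c d =>
      rw [hX.mul_tmul, hX.lift_tmul hle, hX.lift_tmul hle, hX.lift_tmul hle, map_mul, map_mul,
        (hcomm c b).symm.mul_mul_mul_comm]

lemma lift_continuousStar (hX : IsTensorCompletion ν X ι) (hstar : ∀ u, ‖star (ι u)‖ ≤ ‖ι u‖)
    (hle : ∀ u,
      ‖mulLift (ρ₁ : A →ₗ[ℂ] (H →L[ℂ] H)) (ρ₂ : B →ₗ[ℂ] (H →L[ℂ] H)) u‖ ≤ ν u)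
    (hcomm : ∀ a b, Commute (ρ₁ a) (ρ₂ b)) (x : X) :
    hX.lift ρ₁ ρ₂ (hX.continuousStar x) = star (hX.lift ρ₁ ρ₂ x) := by
  induction x using hX.induction_on with
  | isClosed => exact isClosed_eq (by fun_prop) (by fun_prop)
  | add x y hx hy => rw [map_add, map_add, hx, hy, map_add, star_add]
  | tmul a b =>
    rw [hX.continuousStar_map hstar, hX.star_tmul, hX.lift_tmul hle, hX.lift_tmul hle, star_mul,
      map_star, map_star, ← map_star ρ₁, ← map_star ρ₂, (hcomm _ _).eq]

end Lift

section ApproximateUnit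

variable {A B X : Type u} [NonUnitalCStarAlgebra A] [NonUnitalCStarAlgebra B]
  [NonUnitalNormedRing X] [StarRing X] [NormedSpace ℂ X] [CompleteSpace X]
  {ν : A ⊗[ℂ] B → ℝ} {ι : A ⊗[ℂ] B →ₗ[ℂ] X}

lemma norm_map_tmul_le (hX : IsTensorCompletion ν X ι) (hν : ∀ a b, ν (a ⊗ₜ b) ≤ ‖a‖ * ‖b‖)
    (a : A) (b : B) : ‖ι (a ⊗ₜ b)‖ ≤ ‖a‖ * ‖b‖ :=
  hX.norm_eq (a ⊗ₜ b) ▸ hν a b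

lemma continuous_map_tmul (hX : IsTensorCompletion ν X ι)
    (hν : ∀ a b, ν (a ⊗ₜ b) ≤ ‖a‖ * ‖b‖) : Continuous fun z : A × B ↦ ι (z.1 ⊗ₜ z.2) := by
  let L : A →L[ℂ] B →L[ℂ] X := LinearMap.mkContinuous₂ ((TensorProduct.mk ℂ A B).compr₂ ι) 1
    fun a b ↦ by simpa using hX.norm_map_tmul_le hν a b
  exact (L.continuous.comp continuous_fst).clm_apply continuous_snd

lemma exists_tendsto_mul_map_tmul (hX : IsTensorCompletion ν X ι)
    (hν : ∀ a b, ν (a ⊗ₜ b) ≤ ‖a‖ * ‖b‖) :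
    ∃ l : Filter (A × B), l.NeBot ∧ ∀ x : X, Tendsto (fun z ↦ x * ι (z.1 ⊗ₜ z.2)) l (𝓝 x) := by
  let := CStarAlgebra.spectralOrder A
  have := CStarAlgebra.spectralOrderedRing A
  let := CStarAlgebra.spectralOrder B
  have := CStarAlgebra.spectralOrderedRing B
  have hA := CStarAlgebra.increasingApproximateUnit A
  have hB := CStarAlgebra.increasingApproximateUnit B
  have := hA.neBot
  have := hB.neBot
  let l := CStarAlgebra.approximateUnit A ×ˢ CStarAlgebra.approximateUnit B
  let T (z : A × B) : X →+ X := AddMonoidHom.mulRight (ι (z.1 ⊗ₜ z.2)) - AddMonoidHom.id X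
  have hT : ∀ᶠ z in l, ∀ x, ‖T z x‖ ≤ 2 * ‖x‖ := by
    filter_upwards [hA.eventually_norm.prod_inl (CStarAlgebra.approximateUnit B),
      hB.eventually_norm.prod_inr (CStarAlgebra.approximateUnit A)] with z h₁ h₂ x
    have hz : ‖ι (z.1 ⊗ₜ z.2)‖ ≤ 1 :=
      (hX.norm_map_tmul_le hν _ _).trans (mul_le_one₀ h₁ (norm_nonneg _) h₂)
    calc ‖T z x‖ ≤ ‖x * ι (z.1 ⊗ₜ z.2)‖ + ‖x‖ := norm_sub_le _ _
      _ ≤ ‖x‖ + ‖x‖ := by gcongr; exact norm_mul_le_of_le le_rfl hz |>.trans_eq (mul_one _)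
      _ = 2 * ‖x‖ := (two_mul _).symm
  have hzero (x : X) : Tendsto (T · x) l (𝓝 0) := by
    induction x using hX.induction_on with
    | isClosed => exact isClosed_setOf_tendsto_zero_of_eventually_norm_le hT
    | add x y hx hy => simpa only [map_add, add_zero] using hx.add hy
    | tmul a b =>
      refine tendsto_sub_nhds_zero_iff.2 ?_
      simp only [AddMonoidHom.mulRight_apply, AddMonoidHom.id_apply, hX.mul_tmul]
      exact ((hX.continuous_map_tmul hν).tendsto (a, b)).comp
        (((hA.tendsto_mul_left a).comp tendsto_fst).prodMk_nhds
          ((hB.tendsto_mul_left b).comp tendsto_snd))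
  exact ⟨l, inferInstance, fun x ↦ tendsto_sub_nhds_zero_iff.1 (hzero x)⟩

variable [IsScalarTower ℂ X X] [SMulCommClass ℂ X X]

lemma exists_isIdealSubmodule (hX : IsTensorCompletion ν X ι)
    (hν : ∀ a b, ν (a ⊗ₜ b) ≤ ‖a‖ * ‖b‖) (K : TwoSidedIdeal X) (hK : IsClosed (K : Set X)) :
    ∃ I : Submodule ℂ X, IsIdealSubmodule I ∧ (I : Set X) = K := by
  obtain ⟨l, _, hl⟩ := hX.exists_tendsto_mul_map_tmul hν
  have hsmul (c : ℂ) {x : X} (hx : x ∈ K) : c • x ∈ K := by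
    refine hK.mem_of_tendsto (hl (c • x)) (.of_forall fun z ↦ ?_)
    rw [smul_mul_assoc, ← mul_smul_comm]
    exact K.mul_mem_right _ _ hx
  exact ⟨{ carrier := K, add_mem' := K.add_mem, zero_mem' := K.zero_mem,
           smul_mem' := fun c _ ↦ hsmul c },
    ⟨fun a _ ↦ K.mul_mem_left a _, fun a x hx ↦ K.mul_mem_right x a hx⟩, rfl⟩

lemma star_smul (hX : IsTensorCompletion ν X ι) (hν : ∀ a b, ν (a ⊗ₜ b) ≤ ‖a‖ * ‖b‖)
    (c : ℂ) (x : X) : star (c • x) = star c • star x := by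
  obtain ⟨l, _, hl⟩ := hX.exists_tendsto_mul_map_tmul hν
  refine tendsto_nhds_unique (hl (star (c • x))) ((hl (star c • star x)).congr fun z ↦ ?_)
  have hz : ι (z.1 ⊗ₜ z.2) = star (ι (star z.1 ⊗ₜ star z.2)) := by simp [hX.star_tmul]
  rw [hz, ← star_mul, mul_smul_comm, ← smul_mul_assoc, ← map_smul, star_mul, hX.star_map_smul,
    smul_mul_assoc, mul_smul_comm]

end ApproximateUnit

lemma norm_star_map_le {A B X : Type u} [NonUnitalCStarAlgebra A] [NonUnitalCStarAlgebra B]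
    [NonUnitalNormedRing X] [StarRing X] [NormedSpace ℂ X] [CompleteSpace X]
    {NA : ∀ p : ℕ, Matrix (Fin p) (Fin p) A → ℝ} {NB : ∀ q : ℕ, Matrix (Fin q) (Fin q) B → ℝ}
    {ι : A ⊗[ℂ] B →ₗ[ℂ] X} (hX : IsTensorCompletion (osProjNorm NA NB) X ι)
    (hNA : ∀ p, IsCStarNorm (NA p)) (hNB : ∀ q, IsCStarNorm (NB q)) (u : A ⊗[ℂ] B) :
    ‖star (ι u)‖ ≤ ‖ι u‖ := by
  rw [hX.norm_eq u]
  refine le_osProjNorm fun p q α v w β hu ↦ ?_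
  have hstar : star (ι u) = ι (∑ ik, ∑ jl, (star (β ik) * star (α jl)) •
      (star v ik.1 jl.1 ⊗ₜ[ℂ] star w ik.2 jl.2)) := by
    rw [hu, Finset.sum_comm]
    simp only [map_sum, star_sum, hX.star_map_smul, hX.star_tmul, star_mul, Matrix.star_apply]
    simp only [map_smul]
  rw [hstar, hX.norm_eq]
  refine (osProjNorm_sum_le hNA hNB _ _ _ _).trans_eq ?_
  simp only [norm_star, (hNA p).map_star, (hNB q).map_star]
  ring

end IsTensorCompletion

end TensorCompletion

section ExtremePoints

open Filter Topology

variable {E : Type*} [AddCommGroup E] [Module ℝ E] [TopologicalSpace E]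
  [IsTopologicalAddGroup E] [ContinuousSMul ℝ E]

lemma isCompact_convexJoin {s t : Set E} (hs : IsCompact s) (ht : IsCompact t) :
    IsCompact (convexJoin ℝ s t) := by
  have himage : convexJoin ℝ s t = (fun z : ℝ × E × E ↦ (1 - z.1) • z.2.1 + z.1 • z.2.2) ''
      (Set.Icc 0 1 ×ˢ s ×ˢ t) := by
    ext z
    simp only [mem_convexJoin, segment_eq_image, Set.mem_image, Set.mem_prod, Prod.exists]
    exact ⟨fun ⟨a, ha, b, hb, θ, hθ, hz⟩ ↦ ⟨θ, a, b, ⟨hθ, ha, hb⟩, hz⟩,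
      fun ⟨θ, a, b, ⟨hθ, ha, hb⟩, hz⟩ ↦ ⟨a, ha, b, hb, θ, hθ, hz⟩⟩
  rw [himage]
  exact (isCompact_Icc.prod (hs.prod ht)).image (by fun_prop)

lemma exists_isCompact_convex_union_subset {K s t : Set E} {x : E} (hx : x ∈ K.extremePoints ℝ)
    (hK : Convex ℝ K) (hs : IsCompact s) (hs' : Convex ℝ s) (hsK : s ⊆ K) (hxs : x ∉ s)
    (ht : IsCompact t) (ht' : Convex ℝ t) (htK : t ⊆ K) (hxt : x ∉ t) :
    ∃ r, IsCompact r ∧ Convex ℝ r ∧ r ⊆ K ∧ x ∉ r ∧ s ∪ t ⊆ r := by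
  rcases s.eq_empty_or_nonempty with rfl | hs₀
  · exact ⟨t, ht, ht', htK, hxt, by simp⟩
  rcases t.eq_empty_or_nonempty with rfl | ht₀
  · exact ⟨s, hs, hs', hsK, hxs, by simp⟩
  refine ⟨convexJoin ℝ s t, isCompact_convexJoin hs ht, hs'.convexJoin ht', fun z hz ↦ ?_,
    fun hz ↦ ?_, Set.union_subset (subset_convexJoin_left ht₀) (subset_convexJoin_right hs₀)⟩
  · obtain ⟨a, ha, b, hb, h⟩ := mem_convexJoin.1 hz
    exact hK.segment_subset (hsK ha) (htK hb) h
  · obtain ⟨a, ha, b, hb, h⟩ := mem_convexJoin.1 hz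
    rcases (mem_extremePoints_iff_forall_segment.1 hx).2 a (hsK ha) b (htK hb) h with rfl | rfl
    exacts [hxs ha, hxt hb]

lemma exists_slice_subset_of_mem_extremePoints [LocallyConvexSpace ℝ E] [T2Space E] {K : Set E}
    (hK : IsCompact K) (hconv : Convex ℝ K) {x : E} (hx : x ∈ K.extremePoints ℝ) {U : Set E}
    (hU : U ∈ 𝓝 x) : ∃ (f : StrongDual ℝ E) (u : ℝ), u < f x ∧ ∀ y ∈ K, u < f y → y ∈ U := by
  obtain ⟨r, hr, hr', -, hxr, hsub⟩ : ∃ r, IsCompact r ∧ Convex ℝ r ∧ r ⊆ K ∧ x ∉ r ∧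
      K \ interior U ⊆ r := by
    refine (hK.diff isOpen_interior).induction_on ⟨∅, by simp [convex_empty]⟩ ?_ ?_ fun y hy ↦ ?_
    · exact fun s t hst ⟨r, h₁, h₂, h₃, h₄, h₅⟩ ↦ ⟨r, h₁, h₂, h₃, h₄, hst.trans h₅⟩
    · rintro s t ⟨r, h₁, h₂, h₃, h₄, h₅⟩ ⟨r', h₁', h₂', h₃', h₄', h₅'⟩
      obtain ⟨q, hq₁, hq₂, hq₃, hq₄, hq₅⟩ :=
        exists_isCompact_convex_union_subset hx hconv h₁ h₂ h₃ h₄ h₁' h₂' h₃' h₄'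
      exact ⟨q, hq₁, hq₂, hq₃, hq₄, (Set.union_subset_union h₅ h₅').trans hq₅⟩
    · obtain ⟨f, hf⟩ := geometric_hahn_banach_point_point (x := y) (y := x) <| by
        rintro rfl
        exact hy.2 (mem_interior_iff_mem_nhds.2 hU)
      obtain ⟨c, hyc, hcx⟩ := exists_between hf
      have hnhds : {z | f z < c} ∈ 𝓝 y := (isOpen_lt f.continuous continuous_const).mem_nhds hyc
      exact ⟨K ∩ {z | f z < c},
        inter_mem (mem_of_superset self_mem_nhdsWithin Set.sdiff_subset)
          (mem_nhdsWithin_of_mem_nhds hnhds),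
        K ∩ {z | f z ≤ c}, hK.inter_right (isClosed_le f.continuous continuous_const),
        hconv.inter (convex_halfSpace_le f.isLinear c), Set.inter_subset_left,
        fun h ↦ hcx.not_ge h.2, Set.inter_subset_inter_right _ fun z (hz : f z < c) ↦ hz.le⟩
  obtain ⟨f, u, hru, hux⟩ := geometric_hahn_banach_closed_point hr' hr.isClosed hxr
  refine ⟨f, u, hux, fun y hy huy ↦ interior_subset ?_⟩
  by_contra hyU
  exact (hru y (hsub ⟨hy, hyU⟩)).not_gt huy

end ExtremePoints

section ConjOneSub

variable {A : Type*} [NonUnitalCStarAlgebra A]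

/-- `conjOneSub u x` is `(1 - u) * x * (1 - u)`, expanded so that it makes sense without a unit. -/
def conjOneSub (u : A) : A →+ A where
  toFun x := x - u * x - (x - u * x) * u
  map_zero' := by simp
  map_add' x y := by simp only [mul_add, add_mul, sub_mul]; abel

lemma conjOneSub_apply (u x : A) : conjOneSub u x = x - u * x - (x - u * x) * u := rfl

lemma conjOneSub_star_mul_self {u : A} (hu : IsSelfAdjoint u) (z : A) :
    conjOneSub u (star z * z) = star (z - z * u) * (z - z * u) := by
  simp only [conjOneSub_apply, star_sub, star_mul, mul_sub, sub_mul, hu.star_eq, mul_assoc]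

lemma norm_conjOneSub_le {u : A} (hu : ‖u‖ ≤ 1) (x : A) : ‖conjOneSub u x‖ ≤ 4 * ‖x‖ := by
  have hleft : ‖x - u * x‖ ≤ 2 * ‖x‖ :=
    calc ‖x - u * x‖ ≤ ‖x‖ + ‖u‖ * ‖x‖ := (norm_sub_le _ _).trans (by gcongr; exact norm_mul_le _ _)
      _ ≤ ‖x‖ + 1 * ‖x‖ := by gcongr
      _ = 2 * ‖x‖ := by ring
  calc ‖conjOneSub u x‖ ≤ ‖x - u * x‖ + ‖x - u * x‖ * ‖u‖ :=
        (norm_sub_le _ _).trans (by gcongr; exact norm_mul_le _ _)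
    _ ≤ 2 * ‖x‖ + 2 * ‖x‖ * 1 := by gcongr
    _ = 4 * ‖x‖ := by ring

lemma norm_conjOneSub_cfcₙ_le {w : ℝ → ℝ} (hw : Continuous w) (hw₀ : w 0 = 0) {a : A}
    (ha : IsSelfAdjoint a) {δ : ℝ} (hδ : ∀ t, |(1 - w t) ^ 2 * t| ≤ δ) :
    ‖conjOneSub (cfcₙ w a) a‖ ≤ δ := by
  have hcfc : conjOneSub (cfcₙ w a) a = cfcₙ (fun t ↦ t - w t * t - (t - w t * t) * w t) a := by
    rw [cfcₙ_sub (fun t ↦ t - w t * t) (fun t ↦ (t - w t * t) * w t) a (by fun_prop) (by simp)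
      (by fun_prop) (by simp), cfcₙ_mul (fun t ↦ t - w t * t) w a (by fun_prop) (by simp)
      (by fun_prop) hw₀, cfcₙ_sub (fun t ↦ t) (fun t ↦ w t * t) a (by fun_prop) rfl (by fun_prop)
      (by simp), cfcₙ_mul w (fun t ↦ t) a (by fun_prop) hw₀ (by fun_prop) rfl, cfcₙ_id' ℝ a]
    rfl
  rw [hcfc]
  refine norm_cfcₙ_le fun t _ ↦ ?_
  convert hδ t using 1
  rw [Real.norm_eq_abs]
  ring_nf

lemma abs_sq_one_sub_div_mul_le {δ : ℝ} (hδ : 0 < δ) (t : ℝ) :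
    |(1 - t / (t ^ 2 + δ ^ 2) * t) ^ 2 * t| ≤ δ := by
  have hpos : 0 < t ^ 2 + δ ^ 2 := by positivity
  have heq : 1 - t / (t ^ 2 + δ ^ 2) * t = δ ^ 2 / (t ^ 2 + δ ^ 2) := by field_simp; ring
  rw [heq, abs_mul, abs_of_nonneg (by positivity), div_pow, div_mul_eq_mul_div,
    div_le_iff₀ (by positivity)]
  have hmul : δ * |t| ≤ t ^ 2 + δ ^ 2 := by nlinarith [sq_nonneg (|t| - δ), sq_abs t]
  calc (δ ^ 2) ^ 2 * |t| = δ * (δ ^ 2 * (δ * |t|)) := by ring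
    _ ≤ δ * ((t ^ 2 + δ ^ 2) * (t ^ 2 + δ ^ 2)) := by
      gcongr
      exact le_add_of_nonneg_left (sq_nonneg t)
    _ = δ * (t ^ 2 + δ ^ 2) ^ 2 := by ring

lemma exists_norm_conjOneSub_le {a : A} (ha : IsSelfAdjoint a) {δ : ℝ} (hδ : 0 < δ) :
    ∃ v : A, IsSelfAdjoint (v * a) ∧ ‖v * a‖ ≤ 1 ∧ ‖conjOneSub (v * a) a‖ ≤ δ := by
  have hpos (t : ℝ) : 0 < t ^ 2 + δ ^ 2 := by positivity
  have hcont : Continuous fun t : ℝ ↦ t / (t ^ 2 + δ ^ 2) := by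
    exact continuous_id.div (by fun_prop) fun t ↦ (hpos t).ne'
  have hmul : cfcₙ (fun t : ℝ ↦ t / (t ^ 2 + δ ^ 2)) a * a =
      cfcₙ (fun t : ℝ ↦ t / (t ^ 2 + δ ^ 2) * t) a := by
    rw [cfcₙ_mul _ (fun t ↦ t) a hcont.continuousOn (by simp) (by fun_prop) rfl, cfcₙ_id' ℝ a]
  refine ⟨cfcₙ (fun t : ℝ ↦ t / (t ^ 2 + δ ^ 2)) a, ?_⟩
  rw [hmul]
  refine ⟨cfcₙ_predicate (R := ℝ) _ _, norm_cfcₙ_le fun t _ ↦ ?_,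
    norm_conjOneSub_cfcₙ_le (by fun_prop) (by simp) ha (abs_sq_one_sub_div_mul_le hδ)⟩
  rw [div_mul_eq_mul_div, Real.norm_of_nonneg (div_nonneg (mul_self_nonneg t) (hpos t).le),
    div_le_one (hpos t)]
  nlinarith

end ConjOneSub

section QuasiState

open Filter Topology
open scoped ComplexOrder ComplexStarModule

instance {E : Type*} [NormedAddCommGroup E] [NormedSpace ℂ E] :
    LocallyConvexSpace ℝ (WeakDual ℂ E) :=
  inferInstanceAs (LocallyConvexSpace ℝ (WeakBilin (topDualPairing ℂ E)))

lemma exists_forall_eq_re_apply {E : Type*} [NormedAddCommGroup E] [NormedSpace ℂ E]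
    (f : StrongDual ℝ (WeakDual ℂ E)) : ∃ a : E, ∀ φ : WeakDual ℂ E, f φ = (φ a).re := by
  have : IsScalarTower ℝ ℂ (WeakDual ℂ E) := inferInstanceAs (IsScalarTower ℝ ℂ (E →L[ℂ] ℂ))
  obtain ⟨a, ha⟩ := LinearMap.dualEmbedding_surjective (topDualPairing ℂ E)
    (StrongDual.extendRCLikeₗ (𝕜 := ℂ) f)
  refine ⟨a, fun φ ↦ ?_⟩
  exact (StrongDual.re_extendRCLike_apply (𝕜 := ℂ) f φ).symm.trans
    congr(RCLike.re ($(ha.symm) φ))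

variable {A : Type*} [NonUnitalCStarAlgebra A] [PartialOrder A]

variable (A) in
/-- The quasi-state space of `A`, i.e. the positive functionals of norm at most one, as a subset
of the weak-* dual. -/
def quasiStates : Set (WeakDual ℂ A) := {φ | (∀ a, 0 ≤ a → 0 ≤ φ a) ∧ ∀ a, ‖φ a‖ ≤ ‖a‖}

lemma isCompact_quasiStates : IsCompact (quasiStates A) := by
  refine (WeakDual.isCompact_closedBall 0 1).of_isClosed_subset ?_ fun φ hφ ↦ ?_
  · simp only [quasiStates, Set.ofPred_and, Set.ofPred_forall]
    have heval (a : A) : Continuous fun φ : WeakDual ℂ A ↦ φ a := WeakDual.eval_continuous a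
    exact (isClosed_iInter fun a ↦ isClosed_iInter fun _ ↦
      isClosed_le continuous_const (heval a)).inter
        (isClosed_iInter fun a ↦ isClosed_le (heval a).norm continuous_const)
  · rw [Set.mem_preimage, mem_closedBall_zero_iff]
    exact ContinuousLinearMap.opNorm_le_bound _ zero_le_one fun a ↦ by simpa using hφ.2 a

lemma convex_quasiStates : Convex ℝ (quasiStates A) := by
  intro φ hφ ψ hψ s t hs ht hst
  refine ⟨fun a ha ↦ ?_, fun a ↦ ?_⟩
  · exact add_nonneg (smul_nonneg hs (hφ.1 a ha)) (smul_nonneg ht (hψ.1 a ha))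
  · calc ‖s • φ a + t • ψ a‖ ≤ s * ‖φ a‖ + t * ‖ψ a‖ := by
          simpa [norm_smul, abs_of_nonneg, hs, ht] using norm_add_le (s • φ a) (t • ψ a)
      _ ≤ s * ‖a‖ + t * ‖a‖ := by gcongr <;> [exact hφ.2 a; exact hψ.2 a]
      _ = ‖a‖ := by rw [← add_mul, hst, one_mul]

lemma zero_mem_quasiStates : (0 : WeakDual ℂ A) ∈ quasiStates A :=
  ⟨fun _ _ ↦ le_rfl, fun a ↦ norm_zero.trans_le (norm_nonneg a)⟩

variable (A) in
/-- The pure states of `A`, described as the nonzero extreme points of the quasi-state space; this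
is the description that remains correct when `A` has no unit. -/
def pureStates : Set (WeakDual ℂ A) := (quasiStates A).extremePoints ℝ \ {0}

lemma pureStates_subset_quasiStates : pureStates A ⊆ quasiStates A := fun _ h ↦ h.1.1

/-- A quasi-state as a bundled positive functional, which is what Mathlib's GNS construction takes
as input. -/
def toPositiveLinearMap [StarOrderedRing A] {φ : WeakDual ℂ A} (hφ : φ ∈ quasiStates A) :
    A →ₚ[ℂ] ℂ :=
  .mk₀ (φ : A →ₗ[ℂ] ℂ) hφ.1

lemma isExtreme_quasiStates_inter (S : Set A) (hS : ∀ a ∈ S, 0 ≤ a) :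
    IsExtreme ℝ (quasiStates A) (quasiStates A ∩ {φ | ∀ a ∈ S, φ a = 0}) := by
  refine ⟨Set.inter_subset_left, ?_⟩
  rintro φ hφ ψ hψ _ ⟨-, hzero⟩ ⟨s, t, hs, ht, -, rfl⟩
  refine ⟨hφ, fun a ha ↦ ?_⟩
  have hsum : s • φ a + t • ψ a = 0 := hzero a ha
  have hφa := hφ.1 a (hS a ha)
  have hψa := smul_nonneg ht.le (hψ.1 a (hS a ha))
  have hsφ := ((add_eq_zero_iff_of_nonneg (smul_nonneg hs.le hφa) hψa).1 hsum).1
  exact (smul_eq_zero.1 hsφ).resolve_left hs.ne'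

variable [StarOrderedRing A]

lemma exists_mem_quasiStates_re_neg {C : PointedCone ℝ A} (hC : ∀ a, 0 ≤ a → a ∈ C) {y : A}
    (hy : IsSelfAdjoint y) (hyC : y ∉ closure (C : Set A)) :
    ∃ φ ∈ quasiStates A, (∀ c ∈ C, IsSelfAdjoint c → 0 ≤ (φ c).re) ∧ (φ y).re < 0 := by
  obtain ⟨f, hfC, hfy⟩ := ProperCone.hyperplane_separation_point (Submodule.closure C) hyC
  let g : StrongDual ℂ A :=
    StrongDual.extendRCLikeₗ ((2⁻¹ : ℝ) • (f + f ∘L (starL' ℝ : A ≃L[ℝ] A)))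
  have hg {a : A} (ha : IsSelfAdjoint a) : g a = f a := by
    have hI : star (Complex.I • a) = -(Complex.I • a) := by simp [ha.star_eq]
    rw [show g a = _ from StrongDual.extendRCLike_apply _ a]
    simp [hI, ha.star_eq]
    ring
  let r : ℝ := (‖g‖ + 1)⁻¹
  have hr : 0 < r := by positivity
  have hrg {a : A} (ha : IsSelfAdjoint a) : (r • g) a = (r * f a : ℝ) := by simp [hg ha]
  refine ⟨r • g, ⟨fun a ha ↦ ?_, fun a ↦ ?_⟩, fun c hc hc' ↦ ?_, ?_⟩
  · change 0 ≤ (r • g) a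
    rw [hrg (.of_nonneg ha), Complex.zero_le_real]
    exact mul_nonneg hr.le (hfC a (subset_closure (hC a ha)))
  · change ‖r • g a‖ ≤ ‖a‖
    rw [norm_smul, Real.norm_of_nonneg hr.le, inv_mul_le_iff₀ (by positivity)]
    exact (g.le_opNorm a).trans (by gcongr; linarith)
  · change 0 ≤ ((r • g) c).re
    rw [hrg hc', Complex.ofReal_re]
    exact mul_nonneg hr.le (hfC c (subset_closure hc))
  · change ((r • g) y).re < 0
    rw [hrg hy, Complex.ofReal_re]
    exact mul_neg_of_pos_of_neg hr hfy

lemma nonneg_of_forall_quasiStates {y : A} (hy : IsSelfAdjoint y)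
    (h : ∀ φ ∈ quasiStates A, 0 ≤ (φ y).re) : 0 ≤ y := by
  by_contra hneg
  have hclosed : y ∉ closure (PointedCone.positive ℝ A : Set A) := by
    rwa [show (PointedCone.positive ℝ A : Set A) = {a | 0 ≤ a} from rfl,
      CStarAlgebra.isClosed_nonneg.closure_eq]
  obtain ⟨φ, hφ, -, hφy⟩ := exists_mem_quasiStates_re_neg (C := PointedCone.positive ℝ A)
    (fun _ ha ↦ ha) hy hclosed
  exact (h φ hφ).not_gt hφy

lemma conjOneSub_nonneg {u x : A} (hu : IsSelfAdjoint u) (hx : 0 ≤ x) : 0 ≤ conjOneSub u x := by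
  obtain ⟨z, rfl⟩ := CStarAlgebra.nonneg_iff_eq_star_mul_self.1 hx
  rw [conjOneSub_star_mul_self hu]
  exact star_mul_self_nonneg _

/-- The cone of the elements `x` such that `-i ≤ x` for some nonnegative `i ∈ I`. -/
def nonnegAddCone (I : Submodule ℂ A) : PointedCone ℝ A where
  carrier := {x | ∃ i ∈ I, 0 ≤ i ∧ 0 ≤ x + i}
  add_mem' := by
    rintro x y ⟨i, hi, hi₀, hx⟩ ⟨j, hj, hj₀, hy⟩
    exact ⟨i + j, I.add_mem hi hj, add_nonneg hi₀ hj₀, add_add_add_comm x y i j ▸ add_nonneg hx hy⟩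
  zero_mem' := ⟨0, I.zero_mem, le_rfl, by simp⟩
  smul_mem' := by
    rintro ⟨t, ht⟩ x ⟨i, hi, hi₀, hx⟩
    refine ⟨t • i, I.smul_mem (t : ℂ) hi, smul_nonneg ht hi₀, ?_⟩
    change 0 ≤ t • x + t • i
    rw [← smul_add]
    exact smul_nonneg ht hx

lemma mem_of_neg_star_mul_self_mem_closure {I : Submodule ℂ A} (hI : IsClosed (I : Set A))
    (hleft : ∀ a, ∀ x ∈ I, a * x ∈ I) {s : A}
    (hs : -(star s * s) ∈ closure (nonnegAddCone I : Set A)) : s ∈ I := by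
  rw [← SetLike.mem_coe, ← hI.closure_eq, Metric.mem_closure_iff]
  intro ε hε
  have hδ : 0 < ε ^ 2 / 6 := by positivity
  obtain ⟨x, ⟨i, hi, hi₀, hxi⟩, hdist⟩ := Metric.mem_closure_iff.1 hs (ε ^ 2 / 6) hδ
  obtain ⟨v, hsa, hnorm, hcut⟩ := exists_norm_conjOneSub_le (.of_nonneg hi₀) hδ
  set u := v * i
  refine ⟨s * u, hleft s u (hleft v i hi), ?_⟩
  set r := -(star s * s) - x with hr
  have hle : conjOneSub u (star s * s) ≤ conjOneSub u i - conjOneSub u r := by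
    have := conjOneSub_nonneg hsa hxi
    rw [← sub_nonneg]
    convert this using 1
    rw [← map_sub, ← map_sub]
    congr 1
    rw [hr]
    abel
  have hsq : ‖s - s * u‖ ^ 2 < ε ^ 2 :=
    calc ‖s - s * u‖ ^ 2 = ‖conjOneSub u (star s * s)‖ := by
          rw [conjOneSub_star_mul_self hsa, CStarRing.norm_star_mul_self, sq]
      _ ≤ ‖conjOneSub u i - conjOneSub u r‖ := CStarAlgebra.norm_le_norm_of_nonneg_of_le
          (conjOneSub_nonneg hsa (star_mul_self_nonneg s)) hle
      _ ≤ ε ^ 2 / 6 + 4 * ‖r‖ :=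
          (norm_sub_le _ _).trans (add_le_add hcut (norm_conjOneSub_le hnorm r))
      _ < ε ^ 2 / 6 + 4 * (ε ^ 2 / 6) := by
          gcongr
          rwa [dist_eq_norm] at hdist
      _ ≤ ε ^ 2 := by linarith [sq_nonneg ε]
  rw [dist_eq_norm]
  exact lt_of_pow_lt_pow_left₀ 2 hε.le hsq

lemma exists_mem_quasiStates_ne_zero {I : Submodule ℂ A} (hI : IsClosed (I : Set A))
    (hleft : ∀ a, ∀ x ∈ I, a * x ∈ I) {s : A} (hs : s ∉ I) :
    ∃ φ ∈ quasiStates A, (∀ i ∈ I, 0 ≤ i → φ i = 0) ∧ φ ≠ 0 := by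
  obtain ⟨φ, hφ, hcone, hneg⟩ := exists_mem_quasiStates_re_neg (C := nonnegAddCone I)
    (fun a ha ↦ ⟨0, I.zero_mem, le_rfl, by simpa using ha⟩)
    (IsSelfAdjoint.star_mul_self s).neg
    fun h ↦ hs (mem_of_neg_star_mul_self_mem_closure hI hleft h)
  refine ⟨φ, hφ, fun i hi hi₀ ↦ ?_, ?_⟩
  · have hre : 0 ≤ (φ (-i)).re := hcone (-i) ⟨i, hi, hi₀, by simp⟩ (IsSelfAdjoint.of_nonneg hi₀).neg
    have him := (Complex.nonneg_iff.1 (hφ.1 i hi₀)).2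
    refine le_antisymm (Complex.nonpos_iff.2 ⟨?_, him.symm⟩) (hφ.1 i hi₀)
    simpa using hre
  · rintro rfl
    exact hneg.ne rfl

lemma exists_mem_pureStates_forall_eq_zero {I : Submodule ℂ A} (hI : IsClosed (I : Set A))
    (hleft : ∀ a, ∀ x ∈ I, a * x ∈ I) (hne : I ≠ ⊤) :
    ∃ φ ∈ pureStates A, ∀ i ∈ I, 0 ≤ i → φ i = 0 := by
  obtain ⟨s, hs⟩ : ∃ s, s ∉ I := by simpa [Submodule.eq_top_iff'] using hne
  obtain ⟨φ₀, hφ₀, hzero₀, hφ₀_ne⟩ := exists_mem_quasiStates_ne_zero hI hleft hs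
  set S := {i | i ∈ I ∧ 0 ≤ i}
  set F := quasiStates A ∩ {φ | ∀ a ∈ S, φ a = 0}
  have hface : IsExtreme ℝ (quasiStates A) F := isExtreme_quasiStates_inter S fun a ha ↦ ha.2
  have hcompact : IsCompact F := by
    refine isCompact_quasiStates.inter_right ?_
    simp only [Set.ofPred_forall]
    exact isClosed_iInter fun a ↦ isClosed_iInter fun _ ↦
      isClosed_eq (WeakDual.eval_continuous a) continuous_const
  have hconvex : Convex ℝ F := by
    refine convex_quasiStates.inter fun φ hφ ψ hψ s t _ _ _ a ha ↦ ?_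
    change s • φ a + t • ψ a = 0
    rw [hφ a ha, hψ a ha, smul_zero, smul_zero, add_zero]
  by_contra! hcon
  have hext : F.extremePoints ℝ ⊆ {0} := fun φ hφ ↦ by
    by_contra hφ_ne
    obtain ⟨i, hi, hi₀, hφi⟩ := hcon φ ⟨hface.extremePoints_subset_extremePoints hφ, hφ_ne⟩
    exact hφi (hφ.1.2 i ⟨hi, hi₀⟩)
  have hsub : F ⊆ {0} := by
    have kreinMilman := closure_convexHull_extremePoints hcompact
    rw [← kreinMilman hconvex]
    exact closure_minimal (convexHull_min hext (convex_singleton 0)) isClosed_singleton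
  exact hφ₀_ne (hsub ⟨hφ₀, fun a ha ↦ hzero₀ a ha.1 ha.2⟩)

lemma map_star_of_mem_quasiStates {φ : WeakDual ℂ A} (hφ : φ ∈ quasiStates A) (a : A) :
    φ (star a) = star (φ a) :=
  map_star (toPositiveLinearMap hφ) a

lemma exists_slice_of_mem_pureStates {φ : WeakDual ℂ A} (hφ : φ ∈ pureStates A) (F : Finset A)
    {ε : ℝ} (hε : 0 < ε) : ∃ (x : A) (t : ℝ), IsSelfAdjoint x ∧ 0 ≤ t ∧ t < (φ x).re ∧
      ∀ f ∈ quasiStates A, t < (f x).re → ∀ a ∈ F, ‖f a - φ a‖ < ε := by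
  obtain ⟨a₀, ha₀⟩ : ∃ a, φ a ≠ 0 := DFunLike.ne_iff.1 hφ.2
  have hU : {f : WeakDual ℂ A | f a₀ ≠ 0 ∧ ∀ a ∈ F, ‖f a - φ a‖ < ε} ∈ 𝓝 φ := by
    have heval (a : A) : Continuous fun f : WeakDual ℂ A ↦ f a := WeakDual.eval_continuous a
    refine ((heval a₀).continuousAt.eventually_ne ha₀).and <|
      (Filter.eventually_all_finset F).2 fun a _ ↦ ?_
    exact ((heval a).sub continuous_const).norm.continuousAt.eventually_lt_const (by simpa)
  have choquet := exists_slice_subset_of_mem_extremePoints (isCompact_quasiStates (A := A))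
  obtain ⟨g, t, htφ, hslice⟩ := choquet convex_quasiStates hφ.1 hU
  obtain ⟨x, hx⟩ := exists_forall_eq_re_apply g
  have hre {f : WeakDual ℂ A} (hf : f ∈ quasiStates A) : (f (ℜ x : A)).re = (f x).re := by
    rw [realPart_apply_coe, ← Complex.coe_smul, map_smul, map_add, map_star_of_mem_quasiStates hf]
    simp
    ring
  refine ⟨ℜ x, t, (ℜ x).2, ?_, ?_, fun f hf htf ↦ ?_⟩
  · by_contra! ht
    exact (hslice 0 zero_mem_quasiStates (by simpa using ht)).1 rfl
  · rwa [hre hφ.1.1, ← hx]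
  · exact (hslice f hf (by rwa [hx, ← hre hf])).2

end QuasiState

section Cutoff

/-- The continuous function which is `0` on `(-∞, s]`, `1` on `[t, ∞)` and affine in between. -/
def cutoff (s t r : ℝ) : ℝ :=
  max 0 (min 1 ((r - s) / (t - s)))

@[fun_prop]
lemma continuous_cutoff (s t : ℝ) : Continuous (cutoff s t) := by
  unfold cutoff
  fun_prop

lemma cutoff_of_le {s t r : ℝ} (hst : s < t) (hr : r ≤ s) : cutoff s t r = 0 :=
  max_eq_left <| (min_le_right _ _).trans <|
    div_nonpos_of_nonpos_of_nonneg (sub_nonpos.2 hr) (sub_pos.2 hst).le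

lemma cutoff_of_ge {s t r : ℝ} (hst : s < t) (hr : t ≤ r) : cutoff s t r = 1 := by
  have hone : 1 ≤ (r - s) / (t - s) := (one_le_div (sub_pos.2 hst)).2 (by linarith)
  rw [cutoff, min_eq_left hone, max_eq_right zero_le_one]

lemma norm_cutoff_le_one (s t r : ℝ) : ‖cutoff s t r‖ ≤ 1 := by
  rw [cutoff, Real.norm_of_nonneg (le_max_left _ _)]
  exact max_le zero_le_one (min_le_left _ _)

variable {A : Type*} [NonUnitalCStarAlgebra A]

lemma cfcₙ_max_zero_sub_mul_cfcₙ_cutoff {x : A} {s t : ℝ} (hs : 0 ≤ s) (hst : s < t) :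
    cfcₙ (fun r ↦ max 0 (r - t)) x * cfcₙ (cutoff s t) x = cfcₙ (fun r ↦ max 0 (r - t)) x := by
  rw [← cfcₙ_mul _ _ x (by fun_prop) (by simp [hs.trans hst.le]) (by fun_prop)
    (cutoff_of_le hst hs)]
  refine cfcₙ_congr fun r _ ↦ ?_
  rcases le_total t r with hr | hr
  · simp [cutoff_of_ge hst hr]
  · simp [hr]

variable [PartialOrder A] [StarOrderedRing A]

lemma smul_cfcₙ_cutoff_mul_self_le {x : A} (hx : IsSelfAdjoint x) {s t : ℝ} (hs : 0 ≤ s)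
    (hst : s < t) : s • (cfcₙ (cutoff s t) x * cfcₙ (cutoff s t) x) ≤
      cfcₙ (cutoff s t) x * x * cfcₙ (cutoff s t) x := by
  have h₀ : cutoff s t 0 = 0 := cutoff_of_le hst hs
  have hconj : cfcₙ (cutoff s t) x * x * cfcₙ (cutoff s t) x =
      cfcₙ (fun r ↦ cutoff s t r * r * cutoff s t r) x := by
    rw [cfcₙ_mul (fun r ↦ cutoff s t r * r) (cutoff s t) x (by fun_prop) (by simp) (by fun_prop) h₀,
      cfcₙ_mul (cutoff s t) (fun r ↦ r) x (by fun_prop) h₀ (by fun_prop) rfl, cfcₙ_id' ℝ x]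
  rw [hconj, ← cfcₙ_mul (cutoff s t) (cutoff s t) x (by fun_prop) h₀ (by fun_prop) h₀,
    ← cfcₙ_smul s (fun r ↦ cutoff s t r * cutoff s t r) x (by fun_prop) (by simp [h₀])]
  refine cfcₙ_mono (fun r _ ↦ ?_) (by fun_prop) (by fun_prop) (by simp [h₀]) (by simp)
  rcases le_total r s with hr | hr
  · simp [cutoff_of_le hst hr]
  · have := mul_le_mul_of_nonneg_right hr (mul_self_nonneg (cutoff s t r))
    simp only [smul_eq_mul]
    linarith

lemma exists_norm_le_sub_cfcₙ_le {x : A} (hx : IsSelfAdjoint x) {t : ℝ} (ht : 0 ≤ t) :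
    ∃ y, ‖y‖ ≤ t ∧ x - cfcₙ (fun r ↦ max 0 (r - t)) x ≤ y := by
  refine ⟨cfcₙ (fun r ↦ max 0 (min r t)) x, norm_cfcₙ_le fun r _ ↦ ?_, ?_⟩
  · rw [Real.norm_of_nonneg (le_max_left _ _)]
    exact max_le ht (min_le_right _ _)
  · rw [sub_le_iff_le_add', ← cfcₙ_add _ _ x (by fun_prop) (by simp [ht]) (by fun_prop)
      (by simp [ht])]
    nth_rw 1 [← cfcₙ_id' ℝ x]
    refine cfcₙ_mono (fun r _ ↦ ?_) (by fun_prop) (by fun_prop) rfl (by simp [ht])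
    calc r = r - t + t := (sub_add_cancel r t).symm
      _ ≤ max 0 (r - t) + max 0 (min r t) := ?_
    rcases le_total t r with hr | hr
    · rw [min_eq_right hr]
      exact add_le_add (le_max_right _ _) (le_max_right _ _)
    · rw [min_eq_left hr, sub_add_cancel]
      exact (le_max_right 0 r).trans (le_add_of_nonneg_left (le_max_left _ _))

lemma cfcₙ_max_zero_sub_le {x : A} (hx : 0 ≤ x) {t : ℝ} (ht : 0 ≤ t) :
    cfcₙ (fun r ↦ max 0 (r - t)) x ≤ x := by
  nth_rw 2 [← cfcₙ_id' ℝ x]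
  exact cfcₙ_mono (fun r hr ↦ max_le (quasispectrum_nonneg_of_nonneg x hx r hr) (by linarith))
    (by fun_prop) (by fun_prop) (by simp [ht]) rfl

end Cutoff

section Excision

open Filter Topology
open scoped ComplexOrder ComplexStarModule

variable {A : Type*} [NonUnitalCStarAlgebra A] [PartialOrder A]

/-- The filter of pairs `(e, e₁)` along which `e` excises the state `φ` in the sense of Akemann,
Anderson and Pedersen, i.e. `e * a * e - φ a • e ^ 2 → 0` for every `a`; the nonnegative element
`e₁` is kept as a witness that `e` acts as a unit on a part of the algebra which `φ` sees. -/
def excision (φ : WeakDual ℂ A) : Filter (A × A) :=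
  comap (fun p a ↦ p.1 * a * p.1 - φ a • (p.1 * p.1)) (𝓝 0) ⊓
    𝓟 {p | ‖p.1‖ ≤ 1 ∧ 0 ≤ p.2 ∧ p.2 * p.1 = p.2 ∧ φ p.2 ≠ 0}

lemma eventually_excision (φ : WeakDual ℂ A) :
    ∀ᶠ p in excision φ, ‖p.1‖ ≤ 1 ∧ 0 ≤ p.2 ∧ p.2 * p.1 = p.2 ∧ φ p.2 ≠ 0 :=
  mem_inf_of_right (mem_principal_self _)

lemma tendsto_excision (φ : WeakDual ℂ A) (a : A) :
    Tendsto (fun p ↦ p.1 * a * p.1 - φ a • (p.1 * p.1)) (excision φ) (𝓝 0) :=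
  tendsto_pi_nhds.1 (tendsto_inf_left (y := 𝓝 (0 : A → A)) tendsto_comap) a

variable [StarOrderedRing A]

lemma norm_apply_star_mul_mul_le {f : WeakDual ℂ A} (hf : f ∈ quasiStates A) (e a : A) :
    ‖f (star e * a * e)‖ ≤ ‖a‖ * (f (star e * e)).re := by
  set g := toPositiveLinearMap hf
  set v := g.toPreGNS e
  have hv : ‖v‖ ^ 2 = (f (star e * e)).re := by
    have := congrArg Complex.re (g.preGNS_norm_sq v)
    rwa [← Complex.ofReal_pow, Complex.ofReal_re] at this
  have hle : ‖g.toPreGNS (a * e)‖ ≤ ‖a‖ * ‖v‖ :=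
    (g.leftMulMapPreGNS a).le_of_opNorm_le (LinearMap.mkContinuous_norm_le _ (norm_nonneg a) _) v
  calc ‖f (star e * a * e)‖ = ‖inner ℂ v (g.toPreGNS (a * e))‖ := by
        rw [mul_assoc, PositiveLinearMap.preGNS_inner_def]
        rfl
    _ ≤ ‖v‖ * (‖a‖ * ‖v‖) := (norm_inner_le_norm _ _).trans (by gcongr)
    _ = ‖a‖ * (f (star e * e)).re := by rw [← hv]; ring

lemma exists_mem_quasiStates_eq_conj {f : WeakDual ℂ A} (hf : f ∈ quasiStates A) {e : A}
    (he : 0 < (f (star e * e)).re) :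
    ∃ g ∈ quasiStates A, ∀ a, ((f (star e * e)).re : ℂ) * g a = f (star e * a * e) := by
  set r := (f (star e * e)).re
  let L : StrongDual ℂ A := (r⁻¹ : ℝ) • (f : StrongDual ℂ A) ∘L
    (ContinuousLinearMap.mul ℂ A).flip e ∘L ContinuousLinearMap.mul ℂ A (star e)
  have hL (a : A) : L a = (r⁻¹ : ℝ) * f (star e * a * e) := rfl
  refine ⟨L, ⟨fun a ha ↦ ?_, fun a ↦ ?_⟩, fun a ↦ ?_⟩
  · change 0 ≤ L a
    rw [hL]
    exact mul_nonneg (Complex.zero_le_real.2 (by positivity))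
      (hf.1 _ (star_left_conjugate_nonneg ha e))
  · change ‖L a‖ ≤ ‖a‖
    rw [hL, norm_mul, Complex.norm_real, Real.norm_of_nonneg (by positivity), inv_mul_le_iff₀ he,
      mul_comm]
    exact norm_apply_star_mul_mul_le hf e a
  · change (r : ℂ) * L a = _
    rw [hL, Complex.ofReal_inv, mul_inv_cancel_left₀ (by exact_mod_cast he.ne')]

lemma norm_le_of_forall_quasiStates_abs_le {y c : A} (hy : IsSelfAdjoint y) (hc : IsSelfAdjoint c)
    (h : ∀ f ∈ quasiStates A, |(f y).re| ≤ (f c).re) : ‖y‖ ≤ 3 * ‖c‖ := by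
  have hadd : 0 ≤ y + c := nonneg_of_forall_quasiStates (hy.add hc) fun f hf ↦ by
    rw [map_add, Complex.add_re]
    linarith [(abs_le.1 (h f hf)).1]
  have hsub : 0 ≤ c - y := nonneg_of_forall_quasiStates (hc.sub hy) fun f hf ↦ by
    rw [map_sub, Complex.sub_re]
    linarith [(abs_le.1 (h f hf)).2]
  calc ‖y‖ = ‖y + c - c‖ := by rw [add_sub_cancel_right]
    _ ≤ ‖y + c‖ + ‖c‖ := norm_sub_le _ _
    _ ≤ ‖c + c‖ + ‖c‖ := by
        gcongr
        exact CStarAlgebra.norm_le_norm_of_nonneg_of_le hadd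
          (add_le_add_left (sub_nonneg.1 hsub) c)
    _ ≤ 3 * ‖c‖ := by linarith [norm_add_le c c]

lemma norm_le_of_forall_quasiStates_norm_le {y c : A} (hc : IsSelfAdjoint c)
    (h : ∀ f ∈ quasiStates A, ‖f y‖ ≤ (f c).re) : ‖y‖ ≤ 6 * ‖c‖ := by
  have hparts {f : WeakDual ℂ A} (hf : f ∈ quasiStates A) :
      (f (ℜ y : A)).re = (f y).re ∧ (f (ℑ y : A)).re = (f y).im := by
    have hstar := map_star_of_mem_quasiStates hf y
    rw [realPart_apply_coe, imaginaryPart_apply_coe, ← Complex.coe_smul, ← Complex.coe_smul]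
    simp only [map_smul, map_add, map_sub, hstar]
    constructor <;> simp <;> ring
  have hre : ‖(ℜ y : A)‖ ≤ 3 * ‖c‖ :=
    norm_le_of_forall_quasiStates_abs_le (ℜ y).2 hc fun f hf ↦
      (hparts hf).1 ▸ (Complex.abs_re_le_norm _).trans (h f hf)
  have him : ‖(ℑ y : A)‖ ≤ 3 * ‖c‖ :=
    norm_le_of_forall_quasiStates_abs_le (ℑ y).2 hc fun f hf ↦
      (hparts hf).2 ▸ (Complex.abs_im_le_norm _).trans (h f hf)
  calc ‖y‖ = ‖(ℜ y : A) + Complex.I • (ℑ y : A)‖ := by rw [realPart_add_I_smul_imaginaryPart]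
    _ ≤ ‖(ℜ y : A)‖ + ‖(ℑ y : A)‖ := (norm_add_le _ _).trans (by simp [norm_smul])
    _ ≤ 6 * ‖c‖ := by linarith

lemma exists_mul_eq_self_norm_sub_le {b : A} (hb : 0 ≤ b) {ε : ℝ} (hε : 0 < ε) :
    ∃ c p : A, c * p = c ∧ ‖b - c‖ ≤ ε := by
  obtain ⟨y, hy, hby⟩ := exists_norm_le_sub_cfcₙ_le (.of_nonneg hb) hε.le
  exact ⟨_, _, cfcₙ_max_zero_sub_mul_cfcₙ_cutoff (half_pos hε).le (half_lt_self hε),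
    (CStarAlgebra.norm_le_norm_of_nonneg_of_le
      (sub_nonneg.2 (cfcₙ_max_zero_sub_le hb hε.le)) hby).trans hy⟩

variable {φ : WeakDual ℂ A}

lemma norm_star_mul_mul_sub_smul_le {e x a : A} {s t ε : ℝ} (hε : 0 ≤ ε) (hts : t < s)
    (hle : s • (star e * e) ≤ star e * x * e)
    (hslice : ∀ f ∈ quasiStates A, t < (f x).re → ‖f a - φ a‖ ≤ ε) :
    ‖star e * a * e - φ a • (star e * e)‖ ≤ 6 * (ε * ‖e‖ ^ 2) := by
  have hnorm : ‖ε • (star e * e)‖ = ε * ‖e‖ ^ 2 := by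
    rw [norm_smul, CStarRing.norm_star_mul_self, Real.norm_of_nonneg hε, sq]
  rw [← hnorm]
  refine norm_le_of_forall_quasiStates_norm_le ((IsSelfAdjoint.all ε).smul (.star_mul_self e))
    fun f hf ↦ ?_
  have hsmul (r : ℝ) (b : A) : (f (r • b)).re = r * (f b).re := by
    rw [← Complex.coe_smul, map_smul, smul_eq_mul, Complex.re_ofReal_mul]
  obtain ⟨hr₀, hr⟩ := Complex.nonneg_iff.1 (hf.1 _ (star_mul_self_nonneg e))
  replace hr : f (star e * e) = ((f (star e * e)).re : ℂ) := Complex.ext rfl hr.symm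
  rw [hsmul, map_sub, map_smul, smul_eq_mul, hr, Complex.ofReal_re]
  rcases hr₀.eq_or_lt with hzero | hpos
  · have hbound := norm_apply_star_mul_mul_le hf e a
    rw [← hzero, mul_zero, norm_le_zero_iff] at hbound
    simp [hbound, ← hzero]
  · obtain ⟨g, hg, hfg⟩ := exists_mem_quasiStates_eq_conj hf hpos
    set r := (f (star e * e)).re
    have hgx : s ≤ (g x).re := by
      have hmono : (f (s • (star e * e))).re ≤ (f (star e * x * e)).re :=
        (Complex.le_def.1 (OrderHomClass.mono (toPositiveLinearMap hf) hle)).1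
      rw [hsmul, ← hfg, Complex.re_ofReal_mul, mul_comm] at hmono
      exact le_of_mul_le_mul_left hmono hpos
    calc ‖f (star e * a * e) - φ a * r‖ = r * ‖g a - φ a‖ := by
          rw [← hfg, mul_comm (φ a), ← mul_sub, norm_mul, Complex.norm_real,
            Real.norm_of_nonneg hr₀]
      _ ≤ ε * r := by
          rw [mul_comm]
          gcongr
          exact hslice g hg (hts.trans_le hgx)

lemma exists_excising_pair (hφ : φ ∈ pureStates A) (F : Finset A) {ε : ℝ} (hε : 0 < ε) :
    ∃ e e₁ : A, ‖e‖ ≤ 1 ∧ 0 ≤ e₁ ∧ e₁ * e = e₁ ∧ φ e₁ ≠ 0 ∧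
      ∀ a ∈ F, ‖e * a * e - φ a • (e * e)‖ ≤ ε := by
  obtain ⟨x, t₀, hx, ht₀, htx, hslice⟩ :=
    exists_slice_of_mem_pureStates hφ F (ε := ε / 6) (by positivity)
  obtain ⟨t₁, h₀₁, h₁x⟩ := exists_between htx
  obtain ⟨t₂, h₁₂, h₂x⟩ := exists_between h₁x
  have ht₁ : 0 ≤ t₁ := ht₀.trans h₀₁.le
  obtain ⟨y, hy, hxy⟩ := exists_norm_le_sub_cfcₙ_le hx (ht₁.trans h₁₂.le)
  let e := cfcₙ (cutoff t₁ t₂) x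
  have he : IsSelfAdjoint e := cfcₙ_predicate (R := ℝ) _ _
  have he_norm : ‖e‖ ≤ 1 := norm_cfcₙ_le fun r _ ↦ norm_cutoff_le_one _ _ r
  have hφ' := pureStates_subset_quasiStates hφ
  refine ⟨e, _, he_norm, cfcₙ_nonneg fun r _ ↦ le_max_left _ _,
    cfcₙ_max_zero_sub_mul_cfcₙ_cutoff ht₁ h₁₂, fun hzero ↦ ?_, fun a ha ↦ ?_⟩
  · have hmono := (Complex.le_def.1 (OrderHomClass.mono (toPositiveLinearMap hφ') hxy)).1
    change (φ (x - cfcₙ (fun r ↦ max 0 (r - t₂)) x)).re ≤ (φ y).re at hmono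
    rw [map_sub, hzero, sub_zero] at hmono
    linarith [(Complex.re_le_norm (φ y)).trans (hφ'.2 y)]
  · have hbound := norm_star_mul_mul_sub_smul_le (φ := φ) (e := e) (x := x) (by positivity) h₀₁
      (he.star_eq.symm ▸ smul_cfcₙ_cutoff_mul_self_le hx ht₁ h₁₂)
      fun f hf hft ↦ (hslice f hf hft a ha).le
    rw [he.star_eq] at hbound
    have : ‖e‖ ^ 2 ≤ 1 := pow_le_one₀ (norm_nonneg e) he_norm
    nlinarith

lemma excision_neBot (hφ : φ ∈ pureStates A) : (excision φ).NeBot := by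
  rw [excision, inf_principal_neBot_iff]
  rintro U ⟨V, hV, hVU⟩
  obtain ⟨F, T, hT, hTV⟩ := mem_pi'.1 (nhds_pi (A := fun _ : A ↦ A) ▸ hV)
  have hsmall : ∀ᶠ ε in 𝓝[>] (0 : ℝ), ∀ a ∈ F, Metric.closedBall 0 ε ⊆ T a :=
    (eventually_all_finset F).2 fun a _ ↦
      (eventually_closedBall_subset (hT a)).filter_mono nhdsWithin_le_nhds
  obtain ⟨ε, hεT, hε⟩ := (hsmall.and self_mem_nhdsWithin).exists
  obtain ⟨e, e₁, he, he₁, he₁e, hφe₁, hex⟩ := exists_excising_pair hφ F hε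
  refine ⟨(e, e₁), hVU (hTV fun a ha ↦ hεT a ha ?_), he, he₁, he₁e, hφe₁⟩
  simpa using hex a ha

end Excision

section IdealDichotomy

open Filter Topology

lemma IsIdealSubmodule.mem_of_norm_sub_lt_one {R : Type*} [NonUnitalNormedRing R]
    [CompleteSpace R] [Module ℂ R] {I : Submodule ℂ R} (hI : IsIdealSubmodule I) {h p k : R}
    (hhp : h * p = h) (hk : k ∈ I) (hpk : ‖p - k‖ < 1) : h ∈ I := by
  set x := p - k with hx
  obtain ⟨c, hc⟩ : ∃ c, x + x * c = c := by
    have hcontr : ContractingWith ‖x‖₊ fun c ↦ x + x * c := by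
      refine ⟨hpk, LipschitzWith.of_dist_le_mul fun c d ↦ ?_⟩
      rw [dist_add_left, dist_eq_norm, dist_eq_norm, ← mul_sub]
      exact norm_mul_le _ _
    exact ⟨_, hcontr.fixedPoint_isFixedPt⟩
  have hhx : h * x = h - h * k := by rw [hx, mul_sub, hhp]
  have hhkc : h * x = h * k * c :=
    calc h * x = h * c - h * x * c := by rw [mul_assoc, ← mul_sub, ← eq_sub_of_add_eq hc]
      _ = h * k * c := by rw [hhx, sub_mul, sub_sub_cancel]
  have heq : h = h * k + h * k * c := by rw [← hhkc, hhx, add_sub_cancel]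
  rw [heq]
  exact I.add_mem (hI.mul_mem_left h hk) (hI.mul_mem_right c (hI.mul_mem_left h hk))

lemma IsIdealSubmodule.mem_of_topologicalClosure_eq_top {R : Type*} [NonUnitalNormedRing R]
    [CompleteSpace R] [Module ℂ R] [ContinuousConstSMul ℂ R] {I : Submodule ℂ R}
    (hI : IsIdealSubmodule I) (htop : I.topologicalClosure = ⊤) {c p : R} (hcp : c * p = c) :
    c ∈ I := by
  have hp : p ∈ closure (I : Set R) := by
    rw [← I.topologicalClosure_coe, htop]
    trivial
  obtain ⟨k, hk, hpk⟩ := Metric.mem_closure_iff.1 hp 1 one_pos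
  exact hI.mem_of_norm_sub_lt_one hcp hk (by rwa [← dist_eq_norm])

section ExcisionIdeal

variable {A : Type*} [NonUnitalCStarAlgebra A] [PartialOrder A] [StarOrderedRing A]

lemma topologicalClosure_eq_top_of_eventually_excision {I : Submodule ℂ A}
    (hleft : ∀ a, ∀ x ∈ I, a * x ∈ I)
    (h : ∀ φ ∈ pureStates A, ∀ᶠ p in excision φ, p.2 ∈ I) : I.topologicalClosure = ⊤ := by
  by_contra hne
  have hleft_closure (a x : A) (hx : x ∈ I.topologicalClosure) : a * x ∈ I.topologicalClosure :=
    map_mem_closure (continuous_const_mul a) hx fun y hy ↦ hleft a y hy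
  obtain ⟨φ, hφ, hzero⟩ :=
    exists_mem_pureStates_forall_eq_zero I.isClosed_topologicalClosure hleft_closure hne
  have := excision_neBot hφ
  obtain ⟨p, hp, -, hp₀, -, hφp⟩ := ((h φ hφ).and (eventually_excision φ)).exists
  exact hφp (hzero p.2 (subset_closure hp) hp₀)

lemma eq_top_of_forall_mul_eq_self_mem {I : Submodule ℂ A} (hI : IsClosed (I : Set A))
    (h : ∀ c p, c * p = c → c ∈ I) : I = ⊤ := by
  rw [eq_top_iff, ← CStarAlgebra.span_nonneg, Submodule.span_le]
  intro b hb
  rw [← hI.closure_eq, Metric.mem_closure_iff]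
  intro ε hε
  obtain ⟨c, p, hcp, hbc⟩ := exists_mul_eq_self_norm_sub_le hb (half_pos hε)
  exact ⟨c, h c p hcp, by rw [dist_eq_norm]; linarith⟩

end ExcisionIdeal

section ExcisionSlice

variable {A B X : Type*} [NonUnitalCStarAlgebra A] [PartialOrder A] [AddCommGroup B] [Module ℂ B]
  [AddCommGroup X] [Module ℂ X] {ι : A ⊗[ℂ] B →ₗ[ℂ] X} {K : Submodule ℂ X}

/-- The elements `b` such that `p ⊗ b ∈ K` for the second component `p` of every sufficiently
late excising pair of `φ`. -/
def excisionSlice (ι : A ⊗[ℂ] B →ₗ[ℂ] X) (K : Submodule ℂ X) (φ : WeakDual ℂ A) :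
    Submodule ℂ B where
  carrier := {b | ∀ᶠ p in excision φ, ι (p.2 ⊗ₜ b) ∈ K}
  add_mem' hb hc := by
    rw [Set.mem_ofPred_eq] at *
    filter_upwards [hb, hc] with p hpb hpc
    simpa only [TensorProduct.tmul_add, map_add] using K.add_mem hpb hpc
  zero_mem' := by simp
  smul_mem' c b hb := by
    rw [Set.mem_ofPred_eq] at *
    filter_upwards [hb] with p hpb
    simpa only [TensorProduct.tmul_smul, map_smul] using K.smul_mem c hpb

lemma mem_excisionSlice {φ : WeakDual ℂ A} {b : B} :
    b ∈ excisionSlice ι K φ ↔ ∀ᶠ p in excision φ, ι (p.2 ⊗ₜ b) ∈ K :=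
  Iff.rfl

end ExcisionSlice

namespace IsTensorCompletion

variable {A B X : Type u} [NonUnitalCStarAlgebra A] [NonUnitalCStarAlgebra B]
  [NonUnitalNormedRing X] [StarRing X]
  [NormedSpace ℂ X] [CompleteSpace X] {ν : A ⊗[ℂ] B → ℝ} {ι : A ⊗[ℂ] B →ₗ[ℂ] X}
  {K : Submodule ℂ X}

lemma norm_map_conj_tmul_sub_le (hX : IsTensorCompletion ν X ι)
    (hν : ∀ a b, ν (a ⊗ₜ b) ≤ ‖a‖ * ‖b‖) {e : A} {f : B}
    (he : ‖e‖ ≤ 1) (hf : ‖f‖ ≤ 1) (a : A) (b : B) (s t : ℂ) :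
    ‖ι ((e * a * e) ⊗ₜ (f * b * f)) - (s * t) • ι ((e * e) ⊗ₜ (f * f))‖ ≤
      ‖e * a * e - s • (e * e)‖ * ‖b‖ + ‖s‖ * ‖f * b * f - t • (f * f)‖ := by
  have hfbf : ‖f * b * f‖ ≤ ‖b‖ := by
    simpa using norm_mul_le_of_le (norm_mul_le_of_le hf le_rfl) hf
  have hee : ‖s • (e * e)‖ ≤ ‖s‖ := by
    simpa [norm_smul] using mul_le_mul_of_nonneg_left (norm_mul_le_of_le he he) (norm_nonneg s)
  have hsplit : ι ((e * a * e) ⊗ₜ (f * b * f)) - (s * t) • ι ((e * e) ⊗ₜ (f * f)) =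
      ι ((e * a * e - s • (e * e)) ⊗ₜ (f * b * f)) +
        ι ((s • (e * e)) ⊗ₜ (f * b * f - t • (f * f))) := by
    simp only [TensorProduct.sub_tmul, TensorProduct.tmul_sub, TensorProduct.tmul_smul,
      ← TensorProduct.smul_tmul', map_sub, map_smul, mul_smul]
    rw [smul_comm, sub_add_sub_cancel]
  rw [hsplit]
  exact (norm_add_le _ _).trans <| add_le_add
    ((hX.norm_map_tmul_le hν _ _).trans (by gcongr))
    ((hX.norm_map_tmul_le hν _ _).trans (by gcongr))

lemma isIdealSubmodule_comap_mk [PartialOrder A] [StarOrderedRing A]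
    (hX : IsTensorCompletion ν X ι)
    (hν : ∀ a b, ν (a ⊗ₜ b) ≤ ‖a‖ * ‖b‖) (hK : IsIdealSubmodule K) (hKc : IsClosed (K : Set X))
    (a : A) : IsIdealSubmodule (K.comap (ι ∘ₗ TensorProduct.mk ℂ A B a)) := by
  have hu := CStarAlgebra.increasingApproximateUnit A
  have := hu.neBot
  have hcont (b : B) : Continuous fun c : A ↦ ι (c ⊗ₜ[ℂ] b) :=
    (hX.continuous_map_tmul hν).comp (.prodMk_left b)
  refine ⟨fun b c hc ↦ ?_, fun b c hc ↦ ?_⟩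
  · refine hKc.mem_of_tendsto (((hcont (b * c)).tendsto a).comp (hu.tendsto_mul_right a))
      (.of_forall fun u ↦ ?_)
    change ι ((u * a) ⊗ₜ (b * c)) ∈ K
    rw [← hX.mul_tmul]
    exact hK.mul_mem_left _ hc
  · refine hKc.mem_of_tendsto (((hcont (c * b)).tendsto a).comp (hu.tendsto_mul_left a))
      (.of_forall fun u ↦ ?_)
    change ι ((a * u) ⊗ₜ (c * b)) ∈ K
    rw [← hX.mul_tmul]
    exact hK.mul_mem_right _ hc

lemma isIdealSubmodule_comap_mk_flip [PartialOrder B] [StarOrderedRing B]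
    (hX : IsTensorCompletion ν X ι)
    (hν : ∀ a b, ν (a ⊗ₜ b) ≤ ‖a‖ * ‖b‖) (hK : IsIdealSubmodule K) (hKc : IsClosed (K : Set X))
    (b : B) : IsIdealSubmodule (K.comap (ι ∘ₗ (TensorProduct.mk ℂ A B).flip b)) := by
  have hu := CStarAlgebra.increasingApproximateUnit B
  have := hu.neBot
  have hcont (a : A) : Continuous fun c : B ↦ ι (a ⊗ₜ[ℂ] c) :=
    (hX.continuous_map_tmul hν).comp (.prodMk_right a)
  refine ⟨fun a c hc ↦ ?_, fun a c hc ↦ ?_⟩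
  · refine hKc.mem_of_tendsto (((hcont (a * c)).tendsto b).comp (hu.tendsto_mul_right b))
      (.of_forall fun u ↦ ?_)
    change ι ((a * c) ⊗ₜ (u * b)) ∈ K
    rw [← hX.mul_tmul]
    exact hK.mul_mem_left _ hc
  · refine hKc.mem_of_tendsto (((hcont (c * a)).tendsto b).comp (hu.tendsto_mul_left b))
      (.of_forall fun u ↦ ?_)
    change ι ((c * a) ⊗ₜ (b * u)) ∈ K
    rw [← hX.mul_tmul]
    exact hK.mul_mem_right _ hc

variable [PartialOrder A]

lemma isIdealSubmodule_excisionSlice [StarOrderedRing A] (hX : IsTensorCompletion ν X ι)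
    (hν : ∀ a b, ν (a ⊗ₜ b) ≤ ‖a‖ * ‖b‖) (hK : IsIdealSubmodule K) (hKc : IsClosed (K : Set X))
    (φ : WeakDual ℂ A) : IsIdealSubmodule (excisionSlice ι K φ) where
  mul_mem_left b _ hc := (mem_excisionSlice.1 hc).mono fun p hp ↦
    (isIdealSubmodule_comap_mk hX hν hK hKc p.2).mul_mem_left b hp
  mul_mem_right b _ hc := (mem_excisionSlice.1 hc).mono fun p hp ↦
    (isIdealSubmodule_comap_mk hX hν hK hKc p.2).mul_mem_right b hp

variable [PartialOrder B]

lemma tendsto_excision_prod [IsScalarTower ℂ X X] [SMulCommClass ℂ X X]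
    (hX : IsTensorCompletion ν X ι)
    (hν : ∀ a b, ν (a ⊗ₜ b) ≤ ‖a‖ * ‖b‖) {φ : WeakDual ℂ A} {ψ : WeakDual ℂ B} {M : X →L[ℂ] ℂ}
    (hM : ∀ a b, M (ι (a ⊗ₜ b)) = φ a * ψ b) (x : X) :
    Tendsto (fun z : (A × A) × (B × B) ↦ ι (z.1.1 ⊗ₜ z.2.1) * x * ι (z.1.1 ⊗ₜ z.2.1) -
      M x • ι ((z.1.1 * z.1.1) ⊗ₜ (z.2.1 * z.2.1))) (excision φ ×ˢ excision ψ) (𝓝 0) := by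
  let τ (z : (A × A) × (B × B)) : X := ι (z.1.1 ⊗ₜ z.2.1)
  let T (z : (A × A) × (B × B)) : X →+ X :=
    (AddMonoidHom.mulRight (τ z)).comp (AddMonoidHom.mulLeft (τ z)) -
      ((M : X →ₗ[ℂ] ℂ).smulRight (τ z * τ z)).toAddMonoidHom
  have hTx (z x) : T z x = τ z * x * τ z - M x • (τ z * τ z) := rfl
  have hbdd : ∀ᶠ z in excision φ ×ˢ excision ψ, ‖z.1.1‖ ≤ 1 ∧ ‖z.2.1‖ ≤ 1 :=
    (((eventually_excision φ).mono fun _ h ↦ h.1).prod_inl _).and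
      (((eventually_excision ψ).mono fun _ h ↦ h.1).prod_inr _)
  have hT : ∀ᶠ z in excision φ ×ˢ excision ψ, ∀ x, ‖T z x‖ ≤ (1 + ‖M‖) * ‖x‖ := by
    filter_upwards [hbdd] with z ⟨h₁, h₂⟩ x
    have hτ : ‖τ z‖ ≤ 1 := (hX.norm_map_tmul_le hν _ _).trans (mul_le_one₀ h₁ (norm_nonneg _) h₂)
    have hxτ : ‖τ z * x * τ z‖ ≤ 1 * ‖x‖ * 1 := norm_mul_le_of_le (norm_mul_le_of_le hτ le_rfl) hτ
    have hMτ : ‖M x • (τ z * τ z)‖ ≤ ‖M‖ * ‖x‖ * (1 * 1) :=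
      (norm_smul_le _ _).trans (mul_le_mul (M.le_opNorm x) (norm_mul_le_of_le hτ hτ)
        (norm_nonneg _) (by positivity))
    rw [hTx]
    linarith [norm_sub_le (τ z * x * τ z) (M x • (τ z * τ z))]
  have hzero (x : X) : Tendsto (T · x) (excision φ ×ˢ excision ψ) (𝓝 0) := by
    induction x using hX.induction_on with
    | isClosed => exact isClosed_setOf_tendsto_zero_of_eventually_norm_le hT
    | add x y hx hy => simpa only [map_add, add_zero] using hx.add hy
    | tmul a b =>
      simp only [hTx, τ, hX.mul_tmul, hM]
      refine squeeze_zero_norm'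
        (hbdd.mono fun z h ↦ hX.norm_map_conj_tmul_sub_le hν h.1 h.2 a b (φ a) (ψ b)) ?_
      have ha := ((tendsto_excision φ a).comp
        (tendsto_fst (f := excision φ) (g := excision ψ))).norm.mul_const ‖b‖
      have hb := ((tendsto_excision ψ b).comp
        (tendsto_snd (f := excision φ) (g := excision ψ))).norm.const_mul ‖φ a‖
      simpa using ha.add hb
  simpa only [hTx, τ, hX.mul_tmul] using hzero x

lemma eventually_map_tmul_mem [IsScalarTower ℂ X X] [SMulCommClass ℂ X X]
    (hX : IsTensorCompletion ν X ι) (hν : ∀ a b, ν (a ⊗ₜ b) ≤ ‖a‖ * ‖b‖)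
    (hK : IsIdealSubmodule K) {φ : WeakDual ℂ A} {ψ : WeakDual ℂ B} {M : X →L[ℂ] ℂ}
    (hM : ∀ a b, M (ι (a ⊗ₜ b)) = φ a * ψ b) {k : X} (hk : k ∈ K) (hMk : M k ≠ 0) :
    ∀ᶠ z in excision φ ×ˢ excision ψ, ι (z.1.2 ⊗ₜ z.2.2) ∈ K := by
  have hsmall := (tendsto_excision_prod hX hν hM k).norm.eventually_lt_const
    (norm_zero.trans_lt (norm_pos_iff.2 hMk))
  filter_upwards [hsmall, (eventually_excision φ).prod_inl (excision ψ),
    (eventually_excision ψ).prod_inr (excision φ)] with z hz hz₁ hz₂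
  set x := ι (z.1.1 ⊗ₜ z.2.1)
  set p := ι ((z.1.1 * z.1.1) ⊗ₜ (z.2.1 * z.2.1))
  refine hK.mem_of_norm_sub_lt_one (p := p) (k := (M k)⁻¹ • (x * k * x)) ?_
    (K.smul_mem _ (hK.mul_mem_right x (hK.mul_mem_left x hk))) ?_
  · simp only [p, hX.mul_tmul, ← mul_assoc, hz₁.2.2.1, hz₂.2.2.1]
  · have hscale : p - (M k)⁻¹ • (x * k * x) = -(M k)⁻¹ • (x * k * x - M k • p) := by
      rw [neg_smul, smul_sub, inv_smul_smul₀ hMk, neg_sub]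
    rwa [hscale, norm_smul, norm_neg, norm_inv, inv_mul_lt_one₀ (norm_pos_iff.2 hMk)]

variable [StarOrderedRing A] [StarOrderedRing B]

lemma map_tmul_mem_of_eventually_excision (hX : IsTensorCompletion ν X ι)
    (hν : ∀ a b, ν (a ⊗ₜ b) ≤ ‖a‖ * ‖b‖) (hK : IsIdealSubmodule K) (hKc : IsClosed (K : Set X))
    (h : ∀ φ ∈ pureStates A, ∀ ψ ∈ pureStates B,
      ∀ᶠ z in excision φ ×ˢ excision ψ, ι (z.1.2 ⊗ₜ z.2.2) ∈ K) (a : A) (b : B) :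
    ι (a ⊗ₜ b) ∈ K := by
  have hslice (φ) (hφ : φ ∈ pureStates A) : (excisionSlice ι K φ).topologicalClosure = ⊤ :=
    topologicalClosure_eq_top_of_eventually_excision
      (fun c x hx ↦ (isIdealSubmodule_excisionSlice hX hν hK hKc φ).mul_mem_left c hx)
      fun ψ hψ ↦ (eventually_swap_iff.1 (h φ hφ ψ hψ)).curry
  have hcont := hX.continuous_map_tmul hν
  have hmul_eq_self (c p : B) (hcp : c * p = c) :
      K.comap (ι ∘ₗ (TensorProduct.mk ℂ A B).flip c) = ⊤ := by
    have hc := isIdealSubmodule_comap_mk_flip hX hν hK hKc c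
    have hclosed : IsClosed (K.comap (ι ∘ₗ (TensorProduct.mk ℂ A B).flip c) : Set A) :=
      hKc.preimage (hcont.comp (.prodMk_left c))
    rw [← hclosed.submodule_topologicalClosure_eq]
    exact topologicalClosure_eq_top_of_eventually_excision (fun a x hx ↦ hc.mul_mem_left a hx)
      fun φ hφ ↦ (isIdealSubmodule_excisionSlice hX hν hK hKc φ).mem_of_topologicalClosure_eq_top
        (hslice φ hφ) hcp
  have htop : K.comap (ι ∘ₗ TensorProduct.mk ℂ A B a) = ⊤ :=
    eq_top_of_forall_mul_eq_self_mem (hKc.preimage (hcont.comp (.prodMk_right a)))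
      fun c p hcp ↦ (Submodule.eq_top_iff'.1 (hmul_eq_self c p hcp) a :)
  exact (Submodule.eq_top_iff'.1 htop b :)

theorem exists_pureStates_forall_eq_zero [IsScalarTower ℂ X X] [SMulCommClass ℂ X X]
    (hX : IsTensorCompletion ν X ι) (hν : ∀ a b, ν (a ⊗ₜ b) ≤ ‖a‖ * ‖b‖)
    (hK : IsIdealSubmodule K) (hKc : IsClosed (K : Set X)) (hne : K ≠ ⊤) :
    ∃ φ ∈ pureStates A, ∃ ψ ∈ pureStates B, ∀ M : X →L[ℂ] ℂ,
      (∀ a b, M (ι (a ⊗ₜ b)) = φ a * ψ b) → ∀ k ∈ K, M k = 0 := by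
  by_contra! h
  refine hne (Submodule.eq_top_iff'.2 fun x ↦ ?_)
  induction x using hX.induction_on with
  | isClosed => exact hKc
  | add x y hx hy => exact K.add_mem hx hy
  | tmul a b =>
    refine map_tmul_mem_of_eventually_excision hX hν hK hKc (fun φ hφ ψ hψ ↦ ?_) a b
    obtain ⟨M, hM, k, hk, hMk⟩ := h φ hφ ψ hψ
    exact eventually_map_tmul_mem hX hν hK hM hk hMk

end IsTensorCompletion

end IdealDichotomy

/-- The Hilbert space tensor product of `E` and `F`. -/
abbrev HilbertTensor (E F : Type*) [NormedAddCommGroup E] [InnerProductSpace ℂ E]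
    [NormedAddCommGroup F] [InnerProductSpace ℂ F] : Type _ :=
  UniformSpace.Completion (E ⊗[ℂ] F)

namespace HilbertTensor

open UniformSpace ContinuousLinearMap
open scoped InnerProductSpace

variable {E F : Type*} [NormedAddCommGroup E] [InnerProductSpace ℂ E]
  [NormedAddCommGroup F] [InnerProductSpace ℂ F]

/-- The elementary tensor `e ⊗ f` as an element of the Hilbert space tensor product. -/
def tmul (e : E) (f : F) : HilbertTensor E F := ((e ⊗ₜ[ℂ] f : E ⊗[ℂ] F) : Completion (E ⊗[ℂ] F))

lemma inner_tmul (e e' : E) (f f' : F) : ⟪tmul e f, tmul e' f'⟫_ℂ = ⟪e, e'⟫_ℂ * ⟪f, f'⟫_ℂ := by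
  rw [tmul, tmul, Completion.inner_coe, TensorProduct.inner_tmul]

lemma continuous_tmul : Continuous fun p : E × F ↦ tmul p.1 p.2 :=
  (Completion.continuous_coe _).comp TensorProduct.continuous_tmul

lemma ext_tmul {G : Type*} [NormedAddCommGroup G] [NormedSpace ℂ G]
    {S T : HilbertTensor E F →L[ℂ] G} (h : ∀ e f, S (tmul e f) = T (tmul e f)) : S = T := by
  ext x
  induction x using Completion.induction_on with
  | hp => exact isClosed_eq S.continuous T.continuous
  | ih x =>
    induction x using TensorProduct.induction_on with
    | zero => simp only [Completion.coe_zero, map_zero]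
    | add x y hx hy => rw [Completion.coe_add, map_add, map_add, hx, hy]
    | tmul e f => exact h e f

section DenseRange

variable {I J : Type*} {u : I → E} {v : J → F}

lemma ext_tmul_of_denseRange (hu : DenseRange u) (hv : DenseRange v) {G : Type*}
    [NormedAddCommGroup G] [NormedSpace ℂ G] {S T : HilbertTensor E F →L[ℂ] G}
    (h : ∀ i j, S (tmul (u i) (v j)) = T (tmul (u i) (v j))) : S = T := by
  have hpair (p : E × F) : S (tmul p.1 p.2) = T (tmul p.1 p.2) :=
    (hu.prodMap hv).induction_on p
      (isClosed_eq (S.continuous.comp continuous_tmul) (T.continuous.comp continuous_tmul))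
      fun i ↦ h i.1 i.2
  exact ext_tmul fun e f ↦ hpair (e, f)

lemma eq_of_inner_tmul_left (hu : DenseRange u) (hv : DenseRange v) {x y : HilbertTensor E F}
    (h : ∀ i j, ⟪tmul (u i) (v j), x⟫_ℂ = ⟪tmul (u i) (v j), y⟫_ℂ) : x = y := by
  have hinner : innerSL ℂ x = innerSL ℂ y := ext_tmul_of_denseRange hu hv fun i j ↦ by
    rw [innerSL_apply_apply, innerSL_apply_apply, ← inner_conj_symm, h, inner_conj_symm]
  exact ext_inner_right ℂ fun z ↦ congr($hinner z)

end DenseRange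

variable (E F) in
/-- The action `T ↦ T ⊗ 1` of the operators on `E`. -/
def leftAction [CompleteSpace E] :
    (E →L[ℂ] E) →⋆ₙₐ[ℂ] (HilbertTensor E F →L[ℂ] HilbertTensor E F) where
  toFun T := (T.rTensor F).completion
  map_smul' c T := ext_tmul fun e f ↦ by simp [tmul]
  map_zero' := ext_tmul fun e f ↦ by simp [tmul]
  map_add' S T := ext_tmul fun e f ↦ by simp [tmul, Completion.coe_add]
  map_mul' S T := ext_tmul fun e f ↦ by simp [tmul]
  map_star' T := ext_tmul fun e f ↦ eq_of_inner_tmul_left denseRange_id denseRange_id fun e' f' ↦ by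
    simp only [star_eq_adjoint, adjoint_inner_right]
    simp [tmul, adjoint_inner_right]

lemma leftAction_tmul [CompleteSpace E] (T : E →L[ℂ] E) (e : E) (f : F) :
    leftAction E F T (tmul e f) = tmul (T e) f :=
  completion_apply_coe _ _

variable (E F) in
/-- The action `T ↦ 1 ⊗ T` of the operators on `F`. -/
def rightAction [CompleteSpace F] :
    (F →L[ℂ] F) →⋆ₙₐ[ℂ] (HilbertTensor E F →L[ℂ] HilbertTensor E F) where
  toFun T := (T.lTensor E).completion
  map_smul' c T := ext_tmul fun e f ↦ by simp [tmul]
  map_zero' := ext_tmul fun e f ↦ by simp [tmul]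
  map_add' S T := ext_tmul fun e f ↦ by simp [tmul, Completion.coe_add]
  map_mul' S T := ext_tmul fun e f ↦ by simp [tmul]
  map_star' T := ext_tmul fun e f ↦ eq_of_inner_tmul_left denseRange_id denseRange_id fun e' f' ↦ by
    simp only [star_eq_adjoint, adjoint_inner_right]
    simp [tmul, adjoint_inner_right]

lemma rightAction_tmul [CompleteSpace F] (T : F →L[ℂ] F) (e : E) (f : F) :
    rightAction E F T (tmul e f) = tmul e (T f) :=
  completion_apply_coe _ _

lemma commute_leftAction_rightAction [CompleteSpace E] [CompleteSpace F] (S : E →L[ℂ] E)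
    (T : F →L[ℂ] F) :
    Commute (leftAction E F S) (rightAction E F T) :=
  ext_tmul fun e f ↦ by simp only [mul_apply_eq_comp, leftAction_tmul, rightAction_tmul]

end HilbertTensor

section GNS

open Filter Topology UniformSpace ContinuousLinearMap Pointwise
open scoped ComplexOrder InnerProductSpace CStarAlgebra

section GNSVector

variable {A : Type*} [NonUnitalCStarAlgebra A] [PartialOrder A] [StarOrderedRing A]
  (f : A →ₚ[ℂ] ℂ)

/-- The canonical map from `A` onto a dense subspace of the GNS space of `f`. -/
def gnsVec : A →ₗ[ℂ] f.GNS :=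
  (Completion.toComplL (𝕜 := ℂ) (E := f.PreGNS) : f.PreGNS →ₗ[ℂ] f.GNS) ∘ₗ
    (f.toPreGNS : A →ₗ[ℂ] f.PreGNS)

lemma denseRange_gnsVec : DenseRange (gnsVec f) :=
  Completion.denseRange_coe.comp f.toPreGNS.surjective.denseRange (Completion.continuous_coe _)

lemma gnsNonUnitalStarAlgHom_gnsVec (a b : A) :
    f.gnsNonUnitalStarAlgHom a (gnsVec f b) = gnsVec f (a * b) :=
  f.gnsNonUnitalStarAlgHom_apply_coe

lemma inner_gnsVec (a b : A) : ⟪gnsVec f a, gnsVec f b⟫_ℂ = f (star a * b) :=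
  (Completion.inner_coe _ _).trans (f.preGNS_inner_def _ _)

variable {f}

lemma norm_apply_le_norm_gnsVec (hf : ∀ a, ‖f a‖ ≤ ‖a‖) (a : A) : ‖f a‖ ≤ ‖gnsVec f a‖ := by
  have hu := CStarAlgebra.increasingApproximateUnit A
  have := hu.neBot
  have hcont : Continuous f := AddMonoidHomClass.continuous_of_bound f 1 (by simpa using hf)
  refine le_of_tendsto ((hcont.tendsto a).comp (hu.tendsto_mul_right a)).norm ?_
  filter_upwards [hu.eventually_norm, hu.eventually_nonneg] with u hu₁ hu₀
  have hstar : star u = u := (IsSelfAdjoint.of_nonneg hu₀).star_eq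
  have hnorm : ‖gnsVec f u‖ ≤ 1 := by
    rw [← sq_le_one_iff₀ (norm_nonneg _), ← inner_self_eq_norm_sq (𝕜 := ℂ), inner_gnsVec]
    calc RCLike.re (f (star u * u)) ≤ ‖f (star u * u)‖ := RCLike.re_le_norm _
      _ ≤ ‖star u * u‖ := hf _
      _ ≤ 1 := by
        rw [CStarRing.norm_star_mul_self]
        exact mul_le_one₀ hu₁ (norm_nonneg u) hu₁
  calc ‖f (u * a)‖ = ‖⟪gnsVec f u, gnsVec f a⟫_ℂ‖ := by rw [inner_gnsVec, hstar]
    _ ≤ ‖gnsVec f u‖ * ‖gnsVec f a‖ := norm_inner_le_norm _ _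
    _ ≤ ‖gnsVec f a‖ := mul_le_of_le_one_left (norm_nonneg _) hnorm

lemma exists_gns_cyclic (hf : ∀ a, ‖f a‖ ≤ ‖a‖) :
    ∃ ξ : f.GNS, ‖ξ‖ ≤ 1 ∧ DenseRange (f.gnsNonUnitalStarAlgHom · ξ) ∧
      ∀ a, ⟪ξ, f.gnsNonUnitalStarAlgHom a ξ⟫_ℂ = f a := by
  have hdense := denseRange_gnsVec f
  have hbound (a : A) : ‖(f : A →ₗ[ℂ] ℂ) a‖ ≤ 1 * ‖gnsVec f a‖ := by
    simpa using norm_apply_le_norm_gnsVec hf a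
  let ℓ : StrongDual ℂ f.GNS := (f : A →ₗ[ℂ] ℂ).extendOfNorm (gnsVec f)
  let ξ : f.GNS := (InnerProductSpace.toDual ℂ f.GNS).symm ℓ
  have hinner (a : A) : ⟪ξ, gnsVec f a⟫_ℂ = f a := by
    rw [InnerProductSpace.toDual_symm_apply]
    exact LinearMap.extendOfNorm_eq hdense ⟨1, hbound⟩ a
  have hcyclic (a : A) : f.gnsNonUnitalStarAlgHom a ξ = gnsVec f a := by
    refine hdense.eq_of_inner_left ℂ fun b ↦ ?_
    rw [inner_gnsVec, ← adjoint_inner_right, ← star_eq_adjoint, ← map_star,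
      gnsNonUnitalStarAlgHom_gnsVec, hinner]
  refine ⟨ξ, ?_, by simpa only [hcyclic] using hdense, fun a ↦ by rw [hcyclic, hinner]⟩
  rw [LinearIsometryEquiv.norm_map]
  exact LinearMap.opNorm_extendOfNorm_le hdense zero_le_one hbound

end GNSVector

section VectorFunctional

variable {A : Type*} [NonUnitalCStarAlgebra A] {H : Type*} [NormedAddCommGroup H]
  [InnerProductSpace ℂ H] [CompleteSpace H]

/-- The functional `a ↦ ⟪v, σ a v⟫` attached to a representation `σ` and a vector `v`. -/
def vectorFunctional (σ : A →⋆ₙₐ[ℂ] (H →L[ℂ] H)) (v : H) : WeakDual ℂ A :=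
  innerSL ℂ v ∘L ContinuousLinearMap.apply ℂ H v ∘L
    ⟨(σ : A →ₗ[ℂ] (H →L[ℂ] H)), map_continuous σ⟩

lemma apply_mem_orthogonal {σ : A →⋆ₙₐ[ℂ] (H →L[ℂ] H)} {S : Submodule ℂ H}
    (hinv : ∀ a, ∀ v ∈ S, σ a v ∈ S) (a : A) {v : H} (hv : v ∈ Sᗮ) : σ a v ∈ Sᗮ := by
  intro w hw
  rw [← adjoint_inner_left, ← star_eq_adjoint, ← map_star]
  exact hv _ (hinv _ _ hw)

lemma vectorFunctional_add_of_mem_orthogonal {σ : A →⋆ₙₐ[ℂ] (H →L[ℂ] H)} {S : Submodule ℂ H}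
    (hinv : ∀ a, ∀ v ∈ S, σ a v ∈ S) {x y : H} (hx : x ∈ S) (hy : y ∈ Sᗮ) :
    vectorFunctional σ (x + y) = vectorFunctional σ x + vectorFunctional σ y :=
  DFunLike.ext _ _ fun a ↦ by
    change ⟪x + y, σ a (x + y)⟫_ℂ = ⟪x, σ a x⟫_ℂ + ⟪y, σ a y⟫_ℂ
    rw [map_add, inner_add_left, inner_add_right, inner_add_right,
      apply_mem_orthogonal hinv a hy x hx, Submodule.inner_left_of_mem_orthogonal (hinv a x hx) hy,
      add_zero, zero_add]

end VectorFunctional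

section PureState

variable {A : Type*} [NonUnitalCStarAlgebra A] [PartialOrder A]

lemma mem_smul_quasiStates {χ : WeakDual ℂ A} {s : ℝ} (hs : 0 ≤ s) (hpos : ∀ a, 0 ≤ a → 0 ≤ χ a)
    (hle : ∀ a, ‖χ a‖ ≤ s * ‖a‖) : χ ∈ s • quasiStates A := by
  obtain rfl | hs' := hs.eq_or_lt
  · have hχ (a : A) : χ a = 0 := by simpa using hle a
    exact ⟨0, zero_mem_quasiStates, DFunLike.ext _ _ fun a ↦ (smul_zero (0 : ℝ)).trans (hχ a).symm⟩
  · refine ⟨s⁻¹ • χ, ⟨fun a ha ↦ ?_, fun a ↦ ?_⟩, smul_inv_smul₀ hs'.ne' χ⟩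
    · exact smul_nonneg (inv_nonneg.2 hs) (hpos a ha)
    · change ‖s⁻¹ • χ a‖ ≤ ‖a‖
      rw [norm_smul, Real.norm_of_nonneg (inv_nonneg.2 hs), inv_mul_le_iff₀ hs']
      exact hle a

lemma exists_eq_smul_of_mem_pureStates {φ χ ω : WeakDual ℂ A} (hφ : φ ∈ pureStates A)
    {s t : ℝ} (hs : 0 ≤ s) (ht : 0 ≤ t) (hst : s + t ≤ 1) (hχ : χ ∈ s • quasiStates A)
    (hω : ω ∈ t • quasiStates A) (hsum : χ + ω = φ) : ∃ c : ℝ, χ = c • φ := by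
  obtain ⟨χ, hχ, rfl⟩ := hχ
  obtain ⟨ω, hω, rfl⟩ := hω
  obtain rfl | hs := hs.eq_or_lt
  · exact ⟨0, (zero_smul ℝ χ).trans (zero_smul ℝ φ).symm⟩
  obtain rfl | ht := ht.eq_or_lt
  · refine ⟨1, ?_⟩
    rw [← hsum]
    exact DFunLike.ext _ _ fun a ↦ by
      change s • χ a = (1 : ℝ) • (s • χ a + (0 : ℝ) • ω a)
      rw [zero_smul, add_zero, one_smul]
  have hs' : 0 < 1 - s := by linarith
  have hω' : (t / (1 - s)) • ω ∈ quasiStates A :=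
    convex_quasiStates.smul_mem_of_zero_mem zero_mem_quasiStates hω
      ⟨by positivity, (div_le_one hs').2 (by linarith)⟩
  refine ⟨s, congrArg (s • ·) (hφ.1.2 hχ hω' ⟨s, 1 - s, hs, hs', by ring, ?_⟩)⟩
  rw [← hsum]
  exact DFunLike.ext _ _ fun a ↦ by
    change s • χ a + (1 - s) • (t / (1 - s)) • ω a = s • χ a + t • ω a
    rw [smul_smul, mul_div_cancel₀ _ hs'.ne']

variable [StarOrderedRing A] {H : Type*} [NormedAddCommGroup H] [InnerProductSpace ℂ H]
  [CompleteSpace H]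

lemma vectorFunctional_mem_smul_quasiStates (σ : A →⋆ₙₐ[ℂ] (H →L[ℂ] H)) (v : H) :
    vectorFunctional σ v ∈ ‖v‖ ^ 2 • quasiStates A := by
  refine mem_smul_quasiStates (by positivity) (fun a ha ↦ ?_) fun a ↦ ?_
  · obtain ⟨b, rfl⟩ := CStarAlgebra.nonneg_iff_eq_star_mul_self.1 ha
    have hnorm : ⟪v, σ (star b * b) v⟫_ℂ = (‖σ b v‖ : ℂ) ^ 2 := by
      rw [map_mul, mul_apply_eq_comp, map_star, star_eq_adjoint, adjoint_inner_right,
        inner_self_eq_norm_sq_to_K]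
      rfl
    exact (by positivity : (0 : ℂ) ≤ (‖σ b v‖ : ℂ) ^ 2).trans_eq hnorm.symm
  · calc ‖⟪v, σ a v⟫_ℂ‖ ≤ ‖v‖ * (‖a‖ * ‖v‖) := (norm_inner_le_norm _ _).trans <|
          mul_le_mul_of_nonneg_left
            ((σ a).le_of_opNorm_le (NonUnitalStarAlgHom.norm_apply_le σ a) v)
            (norm_nonneg v)
      _ = ‖v‖ ^ 2 * ‖a‖ := by ring

lemma eq_bot_or_eq_top_of_vectorFunctional_mem_pureStates {σ : A →⋆ₙₐ[ℂ] (H →L[ℂ] H)} {ξ : H}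
    (hξ : ‖ξ‖ ≤ 1) (hcyc : DenseRange (σ · ξ))
    (hpure : vectorFunctional σ ξ ∈ pureStates A) {S : Submodule ℂ H}
    (hS : IsClosed (S : Set H)) (hinv : ∀ a, ∀ v ∈ S, σ a v ∈ S) : S = ⊥ ∨ S = ⊤ := by
  have hinv' (a : A) (v : H) (hv : v ∈ Sᗮ) : σ a v ∈ Sᗮ := apply_mem_orthogonal hinv a hv
  have heq_top {T : Submodule ℂ H} (hT : IsClosed (T : Set H))
      (hTinv : ∀ a, ∀ v ∈ T, σ a v ∈ T) (hξT : ξ ∈ T) : T = ⊤ :=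
    Submodule.eq_top_iff'.2 fun v ↦
      hcyc.induction_on (p := (· ∈ T)) v hT fun a ↦ hTinv a ξ hξT
  have := hS.completeSpace_coe
  obtain ⟨x, hx, y, hy, rfl⟩ := S.exists_add_mem_mem_orthogonal ξ
  have hsum := vectorFunctional_add_of_mem_orthogonal hinv hx hy
  have hnorm : ‖x‖ ^ 2 + ‖y‖ ^ 2 ≤ 1 := by
    have hpyth := norm_add_sq_eq_norm_sq_add_norm_sq_of_inner_eq_zero x y (hy x hx)
    nlinarith [norm_nonneg (x + y)]
  obtain ⟨c, hc⟩ := exists_eq_smul_of_mem_pureStates hpure (by positivity) (by positivity) hnorm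
    (vectorFunctional_mem_smul_quasiStates σ x) (vectorFunctional_mem_smul_quasiStates σ y)
    hsum.symm
  have hxc : x = (c : ℂ) • (x + y) := hcyc.eq_of_inner_left ℂ fun a ↦ by
    calc ⟪x, σ a (x + y)⟫_ℂ = ⟪x, σ a x⟫_ℂ := by
          rw [map_add, inner_add_right, hinv' a y hy x hx, add_zero]
      _ = c • ⟪x + y, σ a (x + y)⟫_ℂ := DFunLike.congr_fun hc a
      _ = ⟪(c : ℂ) • (x + y), σ a (x + y)⟫_ℂ := by
          rw [inner_smul_left, Complex.conj_ofReal, Complex.real_smul]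
  obtain rfl | hc₀ := eq_or_ne c 0
  · rw [Complex.ofReal_zero, zero_smul] at hxc
    rw [hxc, zero_add] at heq_top
    exact .inl ((Submodule.orthogonal_eq_top_iff S).1 (heq_top S.isClosed_orthogonal hinv' hy))
  · rw [hxc] at hx
    exact .inr (heq_top hS hinv ((S.smul_mem_iff (by exact_mod_cast hc₀)).1 hx))

lemma exists_cyclic_of_mem_quasiStates {A : Type u} [NonUnitalCStarAlgebra A] [PartialOrder A]
    [StarOrderedRing A] {φ : WeakDual ℂ A} (hφ : φ ∈ quasiStates A) :
    ∃ (H : Type u) (_ : NormedAddCommGroup H) (_ : InnerProductSpace ℂ H) (_ : CompleteSpace H)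
      (σ : A →⋆ₙₐ[ℂ] (H →L[ℂ] H)) (ξ : H), ‖ξ‖ ≤ 1 ∧ DenseRange (σ · ξ) ∧
        ∀ a, ⟪ξ, σ a ξ⟫_ℂ = φ a :=
  ⟨_, _, _, inferInstance, _, exists_gns_cyclic (f := toPositiveLinearMap hφ) hφ.2⟩

lemma nonempty_irreducibleRepOn (A : Type u) [NonUnitalCStarAlgebra A] [Nontrivial A] :
    Nonempty (IrreducibleRepOn A) := by
  let := CStarAlgebra.spectralOrder A
  have := CStarAlgebra.spectralOrderedRing A
  obtain ⟨φ, hφ, -⟩ := exists_mem_pureStates_forall_eq_zero (A := A) (I := ⊥)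
    isClosed_singleton (by simp) bot_ne_top
  obtain ⟨H, _, _, _, σ, ξ, hξ, hdense, hinner⟩ := exists_cyclic_of_mem_quasiStates hφ.1.1
  have hvec : vectorFunctional σ ξ = φ := DFunLike.ext _ _ hinner
  refine ⟨⟨H, σ, map_continuous σ, ?_, fun S hS hinv ↦
    eq_bot_or_eq_top_of_vectorFunctional_mem_pureStates hξ hdense (hvec ▸ hφ) hS hinv⟩⟩
  by_contra! hσ
  exact hφ.2 (DFunLike.ext _ _ fun a ↦ by rw [← hinner, hσ, zero_apply, inner_zero_right]; rfl)

end PureState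

end GNS

section IrreducibleRep

open Filter Topology

variable {X : Type u} [NonUnitalNormedRing X] [StarRing X] [NormedSpace ℂ X]

/-- The irreducible representation obtained by composing `ρ` with a ⋆-homomorphism of dense
range. -/
def IrreducibleRepOn.compOfDenseRange {D : Type u} [NonUnitalNormedRing D] [StarRing D]
    [NormedSpace ℂ D] (ρ : IrreducibleRepOn D) {Q : X →⋆ₙₐ[ℂ] D} (hQ : Continuous Q)
    (hdense : DenseRange Q) : IrreducibleRepOn X :=
  letI := ρ.normH
  letI := ρ.ipsH
  haveI := ρ.csH
  { H := ρ.H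
    π := ρ.π.comp Q
    continuous := ρ.continuous.comp hQ
    nonzero := by
      by_contra! hzero
      obtain ⟨d, hd⟩ := ρ.nonzero
      exact hd (hdense.induction_on (p := (ρ.π · = 0)) d
        (isClosed_eq ρ.continuous continuous_const) hzero)
    irreducible := fun S hS hinv ↦ ρ.irreducible S hS fun d v hv ↦
      hdense.induction_on (p := (ρ.π · v ∈ S)) d
        (hS.preimage (ρ.continuous.clm_apply continuous_const)) fun x ↦ hinv x v hv }

lemma exists_irreducibleRepOn_of_ne_zero {H : Type u} [NormedAddCommGroup H]
    [InnerProductSpace ℂ H] [CompleteSpace H] {R : X →⋆ₙₐ[ℂ] (H →L[ℂ] H)} (hR : Continuous R)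
    (hne : ∃ x, R x ≠ 0) : ∃ ρ : IrreducibleRepOn X, ∀ x, R x = 0 → ρ.π x = 0 := by
  let D := (NonUnitalStarAlgHom.range R).topologicalClosure
  have : IsClosed (D : Set (H →L[ℂ] H)) := NonUnitalStarSubalgebra.isClosed_topologicalClosure _
  let : NonUnitalCStarAlgebra D := NonUnitalStarSubalgebra.nonUnitalCStarAlgebra D
  have hmem (x : X) : R x ∈ D := subset_closure ⟨x, rfl⟩
  let Q : X →⋆ₙₐ[ℂ] D := NonUnitalStarAlgHom.codRestrict R D hmem
  have hdense : DenseRange Q := fun d ↦ by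
    rw [closure_subtype, ← Set.range_comp]
    exact d.2
  obtain ⟨x, hx⟩ := hne
  have : Nontrivial D := ⟨Q x, 0, fun h ↦ hx (congrArg Subtype.val h)⟩
  obtain ⟨ρ⟩ := nonempty_irreducibleRepOn D
  refine ⟨ρ.compOfDenseRange (hR.subtype_mk hmem) hdense, fun y hy ↦ ?_⟩
  have hQy : Q y = 0 := Subtype.ext hy
  exact (congrArg ρ.π hQy).trans (map_zero ρ.π)

end IrreducibleRep

section ProductRep

open ContinuousLinearMap HilbertTensor
open scoped InnerProductSpace

variable {A B X E F : Type u} [NonUnitalCStarAlgebra A] [NonUnitalCStarAlgebra B]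
  [NonUnitalNormedRing X] [StarRing X] [NormedSpace ℂ X] [CompleteSpace X]
  [NormedAddCommGroup E] [InnerProductSpace ℂ E] [CompleteSpace E]
  [NormedAddCommGroup F] [InnerProductSpace ℂ F] [CompleteSpace F]
  {NA : ∀ p : ℕ, Matrix (Fin p) (Fin p) A → ℝ} {NB : ∀ q : ℕ, Matrix (Fin q) (Fin q) B → ℝ}
  {ι : A ⊗[ℂ] B →ₗ[ℂ] X} {σ : A →⋆ₙₐ[ℂ] (E →L[ℂ] E)} {τ : B →⋆ₙₐ[ℂ] (F →L[ℂ] F)}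

namespace IsTensorCompletion

/-- The representation `a ⊗ b ↦ σ a ⊗ τ b` of the completion on the Hilbert tensor product. -/
def productRep {ν : A ⊗[ℂ] B → ℝ} (hX : IsTensorCompletion ν X ι) (σ : A →⋆ₙₐ[ℂ] (E →L[ℂ] E))
    (τ : B →⋆ₙₐ[ℂ] (F →L[ℂ] F)) : X →L[ℂ] (HilbertTensor E F →L[ℂ] HilbertTensor E F) :=
  hX.lift ((leftAction E F).comp σ) ((rightAction E F).comp τ)

variable (hX : IsTensorCompletion (osProjNorm NA NB) X ι) (hNA : ∀ p, IsCStarNorm (NA p))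
  (hNB : ∀ q, IsCStarNorm (NB q))

include hNA hNB

lemma productRep_map_tmul (a : A) (b : B) (e : E) (f : F) :
    hX.productRep σ τ (ι (a ⊗ₜ b)) (tmul e f) = tmul (σ a e) (τ b f) := by
  rw [productRep, hX.lift_tmul (norm_mulLift_le_osProjNorm hNA hNB _ _), mul_apply_eq_comp]
  exact (congrArg _ (rightAction_tmul _ _ _)).trans (leftAction_tmul _ _ _)

lemma productRep_mul (x y : X) :
    hX.productRep σ τ (x * y) = hX.productRep σ τ x * hX.productRep σ τ y :=
  hX.lift_mul (norm_mulLift_le_osProjNorm hNA hNB _ _)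
    (fun _ _ ↦ commute_leftAction_rightAction _ _) x y

lemma productRep_continuousStar (x : X) :
    hX.productRep σ τ (hX.continuousStar x) = star (hX.productRep σ τ x) :=
  hX.lift_continuousStar (hX.norm_star_map_le hNA hNB) (norm_mulLift_le_osProjNorm hNA hNB _ _)
    (fun _ _ ↦ commute_leftAction_rightAction _ _) x

lemma productRep_star_map_tmul (a : A) (b : B) :
    hX.productRep σ τ (ι (star a ⊗ₜ star b)) = star (hX.productRep σ τ (ι (a ⊗ₜ b))) := by
  rw [← hX.productRep_continuousStar hNA hNB,
    hX.continuousStar_map (hX.norm_star_map_le hNA hNB), hX.star_tmul]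

lemma productRep_eq_zero_of_mem {K : Submodule ℂ X} (hK : IsIdealSubmodule K) {ξ : E} {η : F}
    (hσ : DenseRange (σ · ξ)) (hτ : DenseRange (τ · η))
    (hzero : ∀ k ∈ K, ⟪tmul ξ η, hX.productRep σ τ k (tmul ξ η)⟫_ℂ = 0) {k : X} (hk : k ∈ K) :
    hX.productRep σ τ k = 0 := by
  refine ext_tmul_of_denseRange hσ hτ fun a b ↦ eq_of_inner_tmul_left hσ hτ fun a' b' ↦ ?_
  have hmem : ι (star a' ⊗ₜ star b') * (k * ι (a ⊗ₜ b)) ∈ K :=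
    hK.mul_mem_left _ (hK.mul_mem_right _ hk)
  calc ⟪tmul (σ a' ξ) (τ b' η), hX.productRep σ τ k (tmul (σ a ξ) (τ b η))⟫_ℂ
      = ⟪tmul ξ η, hX.productRep σ τ (ι (star a' ⊗ₜ star b') * (k * ι (a ⊗ₜ b)))
          (tmul ξ η)⟫_ℂ := by
        simp only [hX.productRep_mul hNA hNB, hX.productRep_star_map_tmul hNA hNB,
          mul_apply_eq_comp, star_eq_adjoint, adjoint_inner_right,
          hX.productRep_map_tmul hNA hNB]
    _ = 0 := hzero _ hmem
    _ = _ := by rw [zero_apply, inner_zero_right]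

lemma exists_rep_forall_eq_zero [IsScalarTower ℂ X X] [SMulCommClass ℂ X X] {K : Submodule ℂ X}
    (hK : IsIdealSubmodule K) (hKc : IsClosed (K : Set X)) (hne : K ≠ ⊤) :
    ∃ (H : Type u) (_ : NormedAddCommGroup H) (_ : InnerProductSpace ℂ H) (_ : CompleteSpace H)
      (R : X →L[ℂ] (H →L[ℂ] H)), (∀ x y, R (x * y) = R x * R y) ∧
        (∀ x, R (hX.continuousStar x) = star (R x)) ∧ (∃ x, R x ≠ 0) ∧ ∀ k ∈ K, R k = 0 := by
  let := CStarAlgebra.spectralOrder A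
  have := CStarAlgebra.spectralOrderedRing A
  let := CStarAlgebra.spectralOrder B
  have := CStarAlgebra.spectralOrderedRing B
  obtain ⟨φ, hφ, ψ, hψ, hφψ⟩ :=
    hX.exists_pureStates_forall_eq_zero (osProjNorm_tmul_le hNA hNB) hK hKc hne
  obtain ⟨E, _, _, _, σ, ξ, -, hσ, hξ⟩ := exists_cyclic_of_mem_quasiStates hφ.1.1
  obtain ⟨F, _, _, _, τ, η, -, hτ, hη⟩ := exists_cyclic_of_mem_quasiStates hψ.1.1
  let R := hX.productRep σ τ
  let M : X →L[ℂ] ℂ := innerSL ℂ (tmul ξ η) ∘L ContinuousLinearMap.apply ℂ _ (tmul ξ η) ∘L R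
  have hM (a : A) (b : B) : M (ι (a ⊗ₜ b)) = φ a * ψ b := by
    rw [← hξ, ← hη, ← inner_tmul, ← hX.productRep_map_tmul hNA hNB]
    rfl
  obtain ⟨a, ha⟩ := DFunLike.exists_ne hφ.2
  obtain ⟨b, hb⟩ := DFunLike.exists_ne hψ.2
  refine ⟨HilbertTensor E F, _, _, inferInstance, R, hX.productRep_mul hNA hNB,
    hX.productRep_continuousStar hNA hNB, ⟨ι (a ⊗ₜ b), fun h ↦ mul_ne_zero ha hb ?_⟩,
    fun k ↦ hX.productRep_eq_zero_of_mem hNA hNB hK hσ hτ (hφψ M hM)⟩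
  calc φ a * ψ b = ⟪tmul ξ η, R (ι (a ⊗ₜ b)) (tmul ξ η)⟫_ℂ := (hM a b).symm
    _ = 0 := by rw [h, zero_apply, inner_zero_right]

end IsTensorCompletion

end ProductRep

section SpectralRadius

open Filter Topology
open scoped NNReal

lemma frontier_ball_diff_closedBall_subset {E : Type*} [PseudoMetricSpace E] (x : E) (R r : ℝ) :
    frontier (Metric.ball x R \ Metric.closedBall x r) ⊆ Metric.sphere x R ∪ Metric.sphere x r := by
  rw [Set.sdiff_eq]
  refine (frontier_inter_subset _ _).trans (Set.union_subset_union ?_ ?_)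
  · exact Set.inter_subset_left.trans Metric.frontier_ball_subset_sphere
  · rw [frontier_compl]
    exact Set.inter_subset_right.trans Metric.frontier_closedBall_subset_sphere

lemma norm_sq_le_mul_of_forall_norm_eq {E : Type*} [NormedAddCommGroup E] [NormedSpace ℂ E]
    {f : ℂ → E} (hf : Differentiable ℂ f) {R a b : ℝ} (hR : 1 < R)
    (ha : ∀ z, ‖z‖ = R → ‖f z‖ ≤ a) (hb : ∀ z, ‖z‖ = R⁻¹ → ‖f z‖ ≤ b) :
    ‖f 1‖ ^ 2 ≤ a * b := by
  obtain ⟨g, hg, hg1⟩ := exists_dual_vector'' ℂ (f 1)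
  let U : Set ℂ := Metric.ball 0 R \ Metric.closedBall 0 R⁻¹
  have hzero : closure U ⊆ {0}ᶜ :=
    (closure_minimal (fun z hz hz' ↦ hz.2 (Metric.ball_subset_closedBall hz'))
      Metric.isOpen_ball.isClosed_compl).trans
      (by simpa using hR.trans' one_pos)
  have hdiff : DiffContOnCl ℂ (fun z ↦ g (f z⁻¹) • f z) U :=
    DifferentiableOn.diffContOnCl fun z hz ↦
      ((g.differentiableAt.comp z ((hf z⁻¹).comp z (differentiableAt_inv (hzero hz)))).smul
        (hf z)).differentiableWithinAt
  have hmul {z : ℂ} (hz : ‖z‖ = R) : ‖f z⁻¹‖ * ‖f z‖ ≤ a * b :=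
    (mul_comm _ _).trans_le <| mul_le_mul (ha z hz) (hb z⁻¹ (by rw [norm_inv, hz]))
      (norm_nonneg _) ((norm_nonneg _).trans (ha z hz))
  have hfrontier (z : ℂ) (hz : z ∈ frontier U) : ‖g (f z⁻¹) • f z‖ ≤ a * b := by
    suffices h : ‖f z⁻¹‖ * ‖f z‖ ≤ a * b by
      rw [norm_smul]
      refine le_trans ?_ h
      gcongr
      simpa using g.le_of_opNorm_le hg (f z⁻¹)
    rcases frontier_ball_diff_closedBall_subset 0 R R⁻¹ hz with h | h
    · exact hmul (mem_sphere_zero_iff_norm.1 h)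
    · have hz' : ‖z⁻¹‖ = R := by rw [norm_inv, mem_sphere_zero_iff_norm.1 h, inv_inv]
      simpa [mul_comm] using hmul hz'
  have h1 : (1 : ℂ) ∈ closure U := subset_closure (by simp [U, hR, inv_lt_one_of_one_lt₀ hR])
  simpa [sq, norm_smul, hg1] using Complex.norm_le_of_forall_mem_frontier_norm_le
    (Metric.isBounded_ball.subset Set.sdiff_subset) hdiff hfrontier h1

variable {V : Type*} [NormedRing V] [NormedAlgebra ℂ V] [CompleteSpace V]

lemma eventually_nnnorm_pow_lt_of_spectralRadius_lt {a : V} {M : ℝ≥0}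
    (h : spectralRadius ℂ a < M) : ∀ᶠ n : ℕ in atTop, ‖a ^ n‖₊ < M ^ n := by
  have hlim := spectrum.pow_nnnorm_pow_one_div_tendsto_nhds_spectralRadius a
  filter_upwards [hlim.eventually_lt_const h, eventually_gt_atTop 0] with n hn hn0
  rw [one_div, ENNReal.rpow_inv_lt_iff (by positivity), ENNReal.rpow_natCast] at hn
  exact_mod_cast hn

lemma exists_forall_nnnorm_pow_le_of_spectralRadius_lt {T : Type*} [TopologicalSpace T]
    {K : Set T} (hK : IsCompact K) {f : T → V} (hf : Continuous f) {M : ℝ≥0}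
    (hM : ∀ t ∈ K, spectralRadius ℂ (f t) < M) :
    ∃ n ≠ 0, ∀ t ∈ K, ‖f t ^ n‖₊ ≤ M ^ n := by
  let W (k : ℕ) : Set T := {t | ‖f t ^ 2 ^ k‖₊ < M ^ 2 ^ k}
  have hWo (k : ℕ) : IsOpen (W k) := isOpen_lt (by fun_prop) continuous_const
  have hWm : Monotone W := monotone_nat_of_le_succ fun k t (ht : ‖_‖₊ < _) ↦ by
    change ‖f t ^ 2 ^ (k + 1)‖₊ < M ^ 2 ^ (k + 1)
    rw [pow_succ 2 k, pow_mul, pow_mul]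
    exact (nnnorm_pow_le' _ two_pos).trans_lt (pow_lt_pow_left₀ ht (by positivity) two_ne_zero)
  have hcover : K ⊆ ⋃ k, W k := fun t ht ↦ by
    have htop : Tendsto (fun k : ℕ ↦ 2 ^ k) atTop atTop :=
      tendsto_pow_atTop_atTop_of_one_lt one_lt_two
    obtain ⟨k, hk⟩ :=
      (htop.eventually (eventually_nnnorm_pow_lt_of_spectralRadius_lt (hM t ht))).exists
    exact Set.mem_iUnion.2 ⟨k, hk⟩
  obtain ⟨k, hk⟩ := hK.elim_directed_cover W hWo hcover hWm.directed_le
  exact ⟨2 ^ k, by positivity, fun t ht ↦ (hk ht).le⟩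

lemma spectralRadius_add_sq_le [NormOneClass V] {P Q : V} {R : ℝ} {M δ : ℝ≥0} (hR : 1 < R)
    (hM : ∀ z : ℂ, ‖z‖ = R → spectralRadius ℂ (z • P + Q) < M)
    (hδ : ∀ z : ℂ, ‖z‖ = R⁻¹ → ‖z • P + Q‖₊ ≤ δ) :
    spectralRadius ℂ (P + Q) ^ 2 ≤ M * δ := by
  obtain ⟨n, hn, hMn⟩ := exists_forall_nnnorm_pow_le_of_spectralRadius_lt
    (isCompact_sphere (0 : ℂ) R) (f := fun z ↦ z • P + Q) (by fun_prop)
    fun z hz ↦ hM z (mem_sphere_zero_iff_norm.1 hz)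
  have hcircles : ‖(P + Q) ^ n‖₊ ^ 2 ≤ M ^ n * δ ^ n := by
    have := norm_sq_le_mul_of_forall_norm_eq (f := fun z : ℂ ↦ (z • P + Q) ^ n) (by fun_prop) hR
      (fun z hz ↦ hMn z (mem_sphere_zero_iff_norm.2 hz))
      fun z hz ↦ (norm_pow_le _ _).trans (pow_le_pow_left₀ (norm_nonneg _) (hδ z hz) n)
    rw [one_smul] at this
    exact_mod_cast this
  refine (ENNReal.pow_le_pow_left_iff hn).1 ?_
  calc (spectralRadius ℂ (P + Q) ^ 2) ^ n = (spectralRadius ℂ (P + Q) ^ n) ^ 2 := pow_right_comm ..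
    _ ≤ (‖(P + Q) ^ n‖₊ : ENNReal) ^ 2 := by
        gcongr
        exact (spectrum.spectralRadius_pow_le _ _ hn).trans (spectrum.spectralRadius_le_nnnorm _)
    _ ≤ (M * δ) ^ n := by
        rw [mul_pow]
        exact_mod_cast hcircles

end SpectralRadius

section AutomaticContinuity

open ContinuousLinearMap Filter Topology
open scoped NNReal

variable {X Y : Type*} [NonUnitalNormedRing X] [NormedSpace ℂ X] [CompleteSpace X]
  [IsScalarTower ℂ X X] [SMulCommClass ℂ X X] [NonUnitalNormedRing Y] [NormedSpace ℂ Y]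
  [CompleteSpace Y] [IsScalarTower ℂ Y Y] [SMulCommClass ℂ Y Y]

lemma spectralRadius_mul_map_le {θ : X ≃ₗ[ℂ] Y} (hθ : ∀ x x', θ (x * x') = θ x * θ x') (x : X) :
    spectralRadius ℂ (mul ℂ Y (θ x)) ≤ ‖x‖₊ := by
  have hconj : (mul ℂ Y (θ x) : Module.End ℂ Y) =
      θ.conjAlgEquiv ℂ (mul ℂ X x : Module.End ℂ X) := by
    ext y
    simp [hθ]
  have hspec : spectrum ℂ (mul ℂ Y (θ x)) = spectrum ℂ (mul ℂ X x) := by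
    rw [ContinuousLinearMap.spectrum_eq, hconj, AlgEquiv.spectrum_eq,
      ContinuousLinearMap.spectrum_eq]
  rw [spectralRadius, hspec]
  rcases subsingleton_or_nontrivial X with _ | _
  · simp [spectrum.of_subsingleton]
  · refine (spectrum.spectralRadius_le_nnnorm (𝕜 := ℂ) (mul ℂ X x)).trans ?_
    exact_mod_cast opNorm_mul_apply_le ℂ X x

lemma spectralRadius_mul_sq_le {θ : X ≃ₗ[ℂ] Y} (hθ : ∀ x x', θ (x * x') = θ x * θ x') {x : X}
    {y : Y} {R : ℝ} (hR : 1 < R) {M δ : ℝ≥0} (hM : R * ‖x‖ + ‖θ.symm y - x‖ < M)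
    (hδ : R⁻¹ * ‖θ x‖ + ‖y - θ x‖ ≤ δ) : spectralRadius ℂ (mul ℂ Y y) ^ 2 ≤ M * δ := by
  rcases subsingleton_or_nontrivial Y with _ | _
  · simp [spectrum.SpectralRadius.of_subsingleton]
  have hadd : mul ℂ Y (θ x) + mul ℂ Y (y - θ x) = mul ℂ Y y := by
    rw [← map_add, add_sub_cancel]
  rw [← hadd]
  refine spectralRadius_add_sq_le hR (fun z hz ↦ ?_) fun z hz ↦ ?_
  · have hmap : z • mul ℂ Y (θ x) + mul ℂ Y (y - θ x) =
        mul ℂ Y (θ (z • x + (θ.symm y - x))) := by simp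
    have hlt : ‖z • x + (θ.symm y - x)‖ < M :=
      (norm_add_le _ _).trans_lt (by rwa [norm_smul, hz])
    rw [hmap]
    exact (spectralRadius_mul_map_le hθ _).trans_lt (by exact_mod_cast hlt)
  · rw [← map_smul, ← map_add, ← NNReal.coe_le_coe]
    exact (opNorm_mul_apply_le ℂ Y _).trans ((norm_add_le _ _).trans (by rwa [norm_smul, hz]))

lemma spectralRadius_mul_eq_zero_of_tendsto {θ : X ≃ₗ[ℂ] Y}
    (hθ : ∀ x x', θ (x * x') = θ x * θ x') {α : Type*} {l : Filter α} [l.NeBot] {x : α → X}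
    {y : Y} (hx : Tendsto x l (𝓝 0)) (hy : Tendsto (θ ∘ x) l (𝓝 y)) :
    spectralRadius ℂ (mul ℂ Y y) = 0 := by
  set b := θ.symm y
  have hle {R : ℝ≥0} (hR : 1 < R) :
      spectralRadius ℂ (mul ℂ Y y) ^ 2 ≤ ((‖b‖₊ + 1) * (R⁻¹ * (‖y‖₊ + 1)) : ℝ≥0) := by
    have hM : Tendsto (fun n ↦ R * ‖x n‖ + ‖b - x n‖) l (𝓝 ‖b‖) := by
      simpa using (hx.norm.const_mul (R : ℝ)).add (hx.const_sub b).norm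
    have hδ : Tendsto (fun n ↦ (R : ℝ)⁻¹ * ‖θ (x n)‖ + ‖y - θ (x n)‖) l
        (𝓝 ((R : ℝ)⁻¹ * ‖y‖)) := by
      simpa using (hy.norm.const_mul (R : ℝ)⁻¹).add (hy.const_sub y).norm
    have hlt : (R : ℝ)⁻¹ * ‖y‖ < (R : ℝ)⁻¹ * (‖y‖ + 1) :=
      mul_lt_mul_of_pos_left (lt_add_one _) (inv_pos.2 (by positivity))
    obtain ⟨n, hn₁, hn₂⟩ := ((hM.eventually_lt_const (lt_add_one ‖b‖)).and
      (hδ.eventually_le_const hlt)).exists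
    rw [ENNReal.coe_mul]
    exact spectralRadius_mul_sq_le hθ (by exact_mod_cast hR) hn₁ hn₂
  have hlim : Tendsto (fun R : ℝ≥0 ↦ (((‖b‖₊ + 1) * (R⁻¹ * (‖y‖₊ + 1)) : ℝ≥0) : ENNReal))
      atTop (𝓝 0) := by
    rw [← ENNReal.coe_zero, ENNReal.tendsto_coe]
    simpa using (tendsto_inv_atTop_zero.mul_const (‖y‖₊ + 1)).const_mul (‖b‖₊ + 1)
  have hsq : spectralRadius ℂ (mul ℂ Y y) ^ 2 ≤ 0 :=
    ge_of_tendsto hlim ((eventually_gt_atTop 1).mono fun _ ↦ hle)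
  simpa using hsq

lemma isUnit_of_isSelfAdjoint_of_mul_eq_one {C : Type*} [Monoid C] [StarMul C] {a b : C}
    (ha : IsSelfAdjoint a) (h : a * b = 1) : IsUnit a := by
  have h' : star b * a = 1 := by rw [← ha.star_eq, ← star_mul, h, star_one]
  exact isUnit_iff_exists_and_exists.2 ⟨⟨b, h⟩, ⟨star b, h'⟩⟩

lemma map_eq_zero_of_spectralRadius_mul_eq_zero {C : Type*} [CStarAlgebra C] {R : Y →ₗ[ℂ] C}
    (hR : ∀ y y', R (y * y') = R y * R y') {y : Y} (hsa : IsSelfAdjoint (R y))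
    (hy : spectralRadius ℂ (mul ℂ Y y) = 0) : R y = 0 := by
  refine CFC.eq_zero_of_spectrum_subset_zero (R := ℝ) (R y) fun t ht ↦ ?_
  by_contra ht0
  have hunit : IsUnit (algebraMap ℂ (Y →L[ℂ] Y) t - mul ℂ Y y) :=
    spectrum.mem_resolventSet_of_spectralRadius_lt (by simpa [hy] using ht0)
  obtain ⟨w, hw⟩ := (isUnit_iff_bijective.1 hunit).surjective y
  have hw' : (t : ℂ) • R w - R y * R w = R y := by
    simpa [Algebra.algebraMap_eq_smul_one, hR] using congrArg R hw
  refine ht (isUnit_of_isSelfAdjoint_of_mul_eq_one (b := (t : ℂ)⁻¹ • (1 + R w)) ?_ ?_)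
  · exact (IsSelfAdjoint.algebraMap C (.all t)).sub hsa
  · have ht0' : (t : ℂ) ≠ 0 := by simpa using ht0
    have halg : algebraMap ℝ C t = (t : ℂ) • 1 := by
      rw [← Algebra.algebraMap_eq_smul_one, ← Complex.coe_algebraMap,
        ← IsScalarTower.algebraMap_apply]
    calc (algebraMap ℝ C t - R y) * ((t : ℂ)⁻¹ • (1 + R w))
        = (t : ℂ)⁻¹ • ((t : ℂ) • 1 - R y + ((t : ℂ) • R w - R y * R w)) := by
          rw [halg, mul_smul_comm, mul_add, mul_one, sub_mul, smul_one_mul]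
      _ = 1 := by rw [hw', sub_add_cancel, inv_smul_smul₀ ht0']

lemma map_eq_zero_of_tendsto {θ : X ≃ₗ[ℂ] Y}
    (hθ : ∀ x x', θ (x * x') = θ x * θ x') {C : Type*} [CStarAlgebra C] {R : Y →ₗ[ℂ] C}
    (hR : ∀ y y', R (y * y') = R y * R y') (hstar : ∀ y, ∃ y', R y' = star (R y))
    {α : Type*} {l : Filter α} [l.NeBot] {x : α → X}
    {y : Y} (hx : Tendsto x l (𝓝 0)) (hy : Tendsto (θ ∘ x) l (𝓝 y)) : R y = 0 := by
  obtain ⟨y', hy'⟩ := hstar y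
  have hx' : Tendsto (fun n ↦ θ.symm y' * x n) l (𝓝 0) := by
    simpa using hx.const_mul (θ.symm y')
  have hyy : Tendsto (θ ∘ fun n ↦ θ.symm y' * x n) l (𝓝 (y' * y)) := by
    simpa [Function.comp_def, hθ] using hy.const_mul y'
  have hRy : R (y' * y) = star (R y) * R y := by rw [hR, hy']
  rw [← CStarRing.star_mul_self_eq_zero_iff, ← hRy]
  exact map_eq_zero_of_spectralRadius_mul_eq_zero hR (hRy ▸ .star_mul_self _)
    (spectralRadius_mul_eq_zero_of_tendsto hθ hx' hyy)

lemma continuous_comp_of_forall_tendsto {𝕜 E F G : Type*} [NontriviallyNormedField 𝕜]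
    [NormedAddCommGroup E] [NormedSpace 𝕜 E] [CompleteSpace E] [NormedAddCommGroup F]
    [NormedSpace 𝕜 F] [CompleteSpace F] [NormedAddCommGroup G] [NormedSpace 𝕜 G]
    {θ : E →ₗ[𝕜] F} {R : F →L[𝕜] G}
    (h : ∀ (x : ℕ → E) (y : F), Tendsto x atTop (𝓝 0) → Tendsto (θ ∘ x) atTop (𝓝 y) → R y = 0) :
    Continuous (R ∘ θ) := by
  let Γ : Submodule 𝕜 (E × F) := θ.graph.topologicalClosure
  have hθ (x : E) : (x, θ x) ∈ Γ := θ.graph.le_topologicalClosure (by simp)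
  have hR {x : E} {y : F} (hxy : (x, y) ∈ Γ) : R y = R (θ x) := by
    have hmem : ((0 : E), y - θ x) ∈ Γ := by simpa using Γ.sub_mem hxy (hθ x)
    obtain ⟨s, hs, hlim⟩ := mem_closure_iff_seq_limit.1 hmem
    have hsnd : Prod.snd ∘ s = θ ∘ Prod.fst ∘ s := funext fun n ↦ by simpa using hs n
    rw [← sub_eq_zero, ← map_sub]
    exact h _ _ ((continuous_fst.tendsto _).comp hlim)
      (hsnd ▸ (continuous_snd.tendsto _).comp hlim)
  have : CompleteSpace Γ := θ.graph.isClosed_topologicalClosure.completeSpace_coe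
  obtain ⟨c, -, hc⟩ := ((ContinuousLinearMap.fst 𝕜 E F).comp Γ.subtypeL).exists_preimage_norm_le
    fun x ↦ ⟨⟨(x, θ x), hθ x⟩, rfl⟩
  refine AddMonoidHomClass.continuous_of_bound ((R : F →ₗ[𝕜] G).comp θ) (‖R‖ * c) fun x ↦ ?_
  obtain ⟨⟨⟨_, y⟩, hxy⟩, rfl, hle⟩ := hc x
  calc _ = ‖R y‖ := congrArg _ (hR hxy).symm
    _ ≤ ‖R‖ * ‖y‖ := R.le_opNorm y
    _ ≤ ‖R‖ * (c * _) := by gcongr; exact (_root_.norm_snd_le (_, y)).trans hle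
    _ = _ := (mul_assoc _ _ _).symm

end AutomaticContinuity

section StarPreserving

open ContinuousLinearMap

variable {A B X : Type u} [NonUnitalCStarAlgebra A] [NonUnitalCStarAlgebra B]
  [NonUnitalNormedRing X] [StarRing X] [NormedSpace ℂ X] [CompleteSpace X]
  [IsScalarTower ℂ X X] [SMulCommClass ℂ X X] {ν : A ⊗[ℂ] B → ℝ} {ι : A ⊗[ℂ] B →ₗ[ℂ] X}
  {H : Type*} [NormedAddCommGroup H] [InnerProductSpace ℂ H] [CompleteSpace H]

namespace IsTensorCompletion

/-- The automorphism comparing the given involution of `X`, which may be discontinuous, with the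
continuous one. -/
def starComparison (hX : IsTensorCompletion ν X ι) (hν : ∀ a b, ν (a ⊗ₜ b) ≤ ‖a‖ * ‖b‖)
    (hstar : ∀ u, ‖star (ι u)‖ ≤ ‖ι u‖) : X ≃ₗ[ℂ] X where
  toFun x := hX.continuousStar (star x)
  invFun x := star (hX.continuousStar x)
  map_add' x y := by rw [star_add, map_add]
  map_smul' c x := by
    rw [hX.star_smul hν, map_smulₛₗ, starRingEnd_apply, star_star, RingHom.id_apply]
  left_inv x := by simp [hX.continuousStar_continuousStar hstar]
  right_inv x := by simp [hX.continuousStar_continuousStar hstar]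

variable (hX : IsTensorCompletion ν X ι) (hν : ∀ a b, ν (a ⊗ₜ b) ≤ ‖a‖ * ‖b‖)
  (hstar : ∀ u, ‖star (ι u)‖ ≤ ‖ι u‖)

lemma starComparison_mul (x y : X) : hX.starComparison hν hstar (x * y) =
    hX.starComparison hν hstar x * hX.starComparison hν hstar y :=
  (congrArg _ (star_mul x y)).trans (hX.continuousStar_mul hstar _ _)

lemma starComparison_map_tmul (a : A) (b : B) :
    hX.starComparison hν hstar (ι (a ⊗ₜ b)) = ι (a ⊗ₜ b) :=
  (hX.continuousStar_map hstar _ ▸ hX.continuousStar_continuousStar hstar _ :)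

include hν hstar

lemma map_star_of_map_continuousStar {R : X →L[ℂ] (H →L[ℂ] H)}
    (hmul : ∀ x y, R (x * y) = R x * R y)
    (hR : ∀ x, R (hX.continuousStar x) = star (R x)) (x : X) : R (star x) = star (R x) := by
  let θ := hX.starComparison hν hstar
  have hcont : Continuous (R ∘ (θ : X →ₗ[ℂ] X)) :=
    continuous_comp_of_forall_tendsto fun _ _ hx hy ↦
      map_eq_zero_of_tendsto (hX.starComparison_mul hν hstar) (R := (R : X →ₗ[ℂ] (H →L[ℂ] H)))
        hmul (fun y ↦ ⟨_, hR y⟩) hx hy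
  have hθ (x : X) : R (θ x) = R x := by
    induction x using hX.induction_on with
    | isClosed => exact isClosed_eq hcont R.continuous
    | add x y hx hy => rw [map_add, map_add, hx, hy, map_add]
    | tmul a b => rw [hX.starComparison_map_tmul hν hstar]
  have hθstar : θ (star x) = hX.continuousStar x := congrArg hX.continuousStar (star_star x)
  rw [← hθ, hθstar, hR]

end IsTensorCompletion

end StarPreserving

/-- **Wiener property.** For any C⋆-algebras `A` and `B`, every proper closed
two-sided ideal of the Banach `*`-algebra `A ⊗̂ B` is annihilated by some irreducible
`*`-representation of `A ⊗̂ B` on a Hilbert space. -/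
theorem wiener_property {A B X : Type u} [NonUnitalCStarAlgebra A] [NonUnitalCStarAlgebra B]
    [NonUnitalNormedRing X] [StarRing X] [NormedSpace ℂ X] [CompleteSpace X]
    [IsScalarTower ℂ X X] [SMulCommClass ℂ X X]
    (NA : ∀ p : ℕ, Matrix (Fin p) (Fin p) A → ℝ)
    (NB : ∀ q : ℕ, Matrix (Fin q) (Fin q) B → ℝ)
    (hNA : ∀ p, IsCStarNorm (NA p)) (hNB : ∀ q, IsCStarNorm (NB q))
    (ι : A ⊗[ℂ] B →ₗ[ℂ] X) (hX : IsTensorCompletion (osProjNorm NA NB) X ι)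
    (K : TwoSidedIdeal X) (hclosed : IsClosed (K : Set X))
    (hproper : (K : Set X) ≠ Set.univ) :
    ∃ ρ : IrreducibleRepOn X, ∀ x ∈ K, ρ.π x = 0 := by
  have hν (a : A) (b : B) := osProjNorm_tmul_le hNA hNB a b
  obtain ⟨I, hI, hIK⟩ := hX.exists_isIdealSubmodule hν K hclosed
  have hne : I ≠ ⊤ := fun h ↦ hproper (by rw [← hIK, h, Submodule.top_coe])
  obtain ⟨H, _, _, _, R, hmul, hR, hR0, hRI⟩ :=
    hX.exists_rep_forall_eq_zero hNA hNB hI (hIK ▸ hclosed) hne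
  let π : X →⋆ₙₐ[ℂ] (H →L[ℂ] H) :=
    { toFun := R
      map_smul' := R.map_smul
      map_zero' := R.map_zero
      map_add' := R.map_add
      map_mul' := hmul
      map_star' := hX.map_star_of_map_continuousStar hν (hX.norm_star_map_le hNA hNB) hmul hR }
  obtain ⟨ρ, hρ⟩ := exists_irreducibleRepOn_of_ne_zero (R := π) R.continuous hR0
  exact ⟨ρ, fun x hx ↦ hρ x (hRI x (hIK.ge hx))⟩

end
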